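/- arXiv:2210.11868 — 2 statements merged into one kernel-verified Lean document; each statement's English description precedes it below -/
import Mathlib

section
/- Let d ≥ 3 and let ψ, ψ_1, ψ_2, … be normalized d-monotone Archimedean generators with pseudo-inverses φ, φ_1, φ_2, …, induced copulas C = C_ψ, C_n = C_{ψ_n}, and (d−1)-marginal densities c^{1:d−1}, c_n^{1:d−1} as defined in the context. Then (C_n)_{n∈ℕ} converges pointwise to C on [0,1]^d if and only if (c_n^{1:d−1})_{n∈ℕ} converges to c^{1:d−1} λ_{d−1}-almost everywhere on [0,1]^{d−1}. -/
/-!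
Both conditions are equivalent to pointwise convergence `Ψ n → ψ` of the generators on `[0,∞)`.

*Copulas to generators* (`tendsto_generator`). Only the bivariate values `ψ(φ(x) + φ(y))` are
needed. Comparing arguments by monotonicity, convergence of these values propagates convergence of
`Ψ n` from `z` to `z / 2` and from `z`, `w` to `z + w`. Since `Ψ n 1 = ψ 1 = 1/2`, it holds at all
dyadic numbers, hence everywhere by monotonicity and continuity of `ψ`. The converse
(`tendsto_archCopula`) is continuity of the operations involved.

*Generators to densities* (`tendsto_margDensity_ae`). Write `d = m + 2`. The functions
`(-1)^k ψ⁽ᵏ⁾`, `k ≤ m`, together with `(-1)^(m+1) D⁻ψ⁽ᵐ⁾`, are non-negative and non-increasing, and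
each is squeezed between slopes of the preceding one (`IsdMonotoneGenerator.slope_le`). So
convergence climbs from one to the next at the continuity points of the limit
(`tower_tendsto_succ`); only the last one can be discontinuous, and only at countably many `t`. The
density is a product of values of the first derivative at `φ(xᵢ)` and of the last function at
`∑ φ(xᵢ)`, so it converges off countably many level sets `∑ φ(xᵢ) = t`, which are null sets
(`IsGenerator.volume_level_eq_zero`).

*Densities to generators* (`tendsto_marginal_of_ae`). The substitution `u = φ(y)`, one coordinate
at a time, shows that `margDensity` is a probability density with distribution function
`ψ(∑ φ(xᵢ))` in `d - 1` variables (`IsdMonotoneGenerator.lintegral_margDensity`). By Scheffé's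
lemma the distribution functions converge. As `d - 1 ≥ 2`, this includes the bivariate
values, and `tendsto_generator` applies.
-/

open MeasureTheory Set Filter Topology
open scoped ENNReal NNReal Classical

noncomputable section

/-- Extension of a generator `ψ` to `[0,∞]` with the convention `ψ(∞) := 0`. -/
def psiExt (ψ : ℝ → ℝ) (z : ℝ≥0∞) : ℝ := if z = ∞ then 0 else ψ z.toReal

/-- The pseudo-inverse `φ(y) = inf {z ∈ [0,∞] : ψ(z) = y}` of a generator. -/
def pseudoInv (ψ : ℝ → ℝ) (y : ℝ) : ℝ≥0∞ := sInf {z : ℝ≥0∞ | psiExt ψ z = y}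

/-- An Archimedean generator: `ψ : [0,∞) → [0,1]` is continuous, non-increasing,
satisfies `ψ 0 = 1` and `ψ(z) → 0` as `z → ∞`, and is strictly decreasing on
`[0, inf {z ∈ [0,∞] : ψ z = 0}]`. -/
structure IsGenerator (ψ : ℝ → ℝ) : Prop where
  continuousOn : ContinuousOn ψ (Ici 0)
  mem_Icc : ∀ z : ℝ, 0 ≤ z → ψ z ∈ Icc (0 : ℝ) 1
  map_zero : ψ 0 = 1
  tendsto_atTop : Tendsto ψ atTop (𝓝 0)
  antitoneOn : AntitoneOn ψ (Ici 0)
  strictAnti : ∀ ⦃x y : ℝ⦄, 0 ≤ x → x < y → ENNReal.ofReal y ≤ pseudoInv ψ 0 → ψ y < ψ x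

/-- The left-hand derivative `D⁻f`. -/
def leftDeriv (f : ℝ → ℝ) (z : ℝ) : ℝ := derivWithin f (Iio z) z

/-- The right-hand derivative `D⁺f`. -/
def rightDeriv (f : ℝ → ℝ) (z : ℝ) : ℝ := derivWithin f (Ioi z) z

/-- A `d`-monotone Archimedean generator: the derivatives `ψ⁽ᵏ⁾` exist on `(0,∞)` for
`k = 1,…,d-2`, and `(-1)^(d-2) · ψ^(d-2)` is non-negative, non-increasing and convex
on `(0,∞)`. -/
structure IsdMonotoneGenerator (d : ℕ) (ψ : ℝ → ℝ) : Prop where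
  toIsGenerator : IsGenerator ψ
  differentiable : ∀ k : ℕ, k < d - 2 → ∀ z : ℝ, 0 < z → DifferentiableAt ℝ (deriv^[k] ψ) z
  nonneg : ∀ z : ℝ, 0 < z → 0 ≤ (-1 : ℝ) ^ (d - 2) * deriv^[d - 2] ψ z
  antitoneOn : AntitoneOn (fun z => (-1 : ℝ) ^ (d - 2) * deriv^[d - 2] ψ z) (Ioi 0)
  convexOn : ConvexOn ℝ (Ioi 0) (fun z => (-1 : ℝ) ^ (d - 2) * deriv^[d - 2] ψ z)

/-- The `d`-dimensional Archimedean copula generated by `ψ`: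
`C_ψ(x) = ψ(φ(x₁) + ⋯ + φ(x_d))` (with `ψ(∞) := 0`). -/
def archCopula (d : ℕ) (ψ : ℝ → ℝ) (x : Fin d → ℝ) : ℝ :=
  psiExt ψ (∑ i, pseudoInv ψ (x i))

/-- A generator is strict if `ψ(z) > 0` for all `z ≥ 0`. -/
def IsStrictGenerator (ψ : ℝ → ℝ) : Prop := ∀ z : ℝ, 0 ≤ z → 0 < ψ z

/-- The level set `L_t = {x ∈ [0,1]^d : C_ψ(x) = t}`. -/
def levelSet (d : ℕ) (ψ : ℝ → ℝ) (t : ℝ) : Set (Fin d → ℝ) :=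
  {x | (∀ i, x i ∈ Icc (0 : ℝ) 1) ∧ archCopula d ψ x = t}

/-- The zero set `L₀^{1:d-1} = {x ∈ [0,1]^{d-1} : φ(x₁)+⋯+φ(x_{d-1}) ≥ φ(0)}`. -/
def zeroMarg (d : ℕ) (ψ : ℝ → ℝ) : Set (Fin (d - 1) → ℝ) :=
  {x | pseudoInv ψ 0 ≤ ∑ i, pseudoInv ψ (x i)}

/-- `f⁰(x)`: equals `1` on `L₀^{1:d-1}` and `ψ(φ(0) - ∑ φ(xᵢ))` otherwise. -/
def fZero (d : ℕ) (ψ : ℝ → ℝ) (x : Fin (d - 1) → ℝ) : ℝ :=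
  if pseudoInv ψ 0 ≤ ∑ i, pseudoInv ψ (x i) then 1
  else psiExt ψ (pseudoInv ψ 0 - ∑ i, pseudoInv ψ (x i))

/-- Extension of `D⁻ψ^(d-2)` to `[0,∞]` with value `0` at `∞`. -/
def DpsiExt (d : ℕ) (ψ : ℝ → ℝ) (z : ℝ≥0∞) : ℝ :=
  if z = ∞ then 0 else leftDeriv (deriv^[d - 2] ψ) z.toReal

/-- The `(d-1)`-Markov kernel `K_C(x,[0,y])` of the Archimedean copula `C_ψ`. -/
def markovKernel (d : ℕ) (ψ : ℝ → ℝ) (x : Fin (d - 1) → ℝ) (y : ℝ) : ℝ :=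
  if (∀ i, x i = 1) ∨ x ∈ zeroMarg d ψ then 1
  else if y < fZero d ψ x then 0
  else DpsiExt d ψ ((∑ i, pseudoInv ψ (x i)) + pseudoInv ψ y)
      / DpsiExt d ψ (∑ i, pseudoInv ψ (x i))

/-- The `(d-1)`-marginal density `c^{1:d-1}` of the Archimedean copula `C_ψ`:
`c(x) = ∏ φ'(xᵢ) · D⁻ψ^(d-2)(∑ φ(xᵢ))` for `x ∈ (0,1)^{d-1}` with `∑ φ(xᵢ) < φ(0)`,
and `0` otherwise. -/
def margDensity (d : ℕ) (ψ : ℝ → ℝ) (x : Fin (d - 1) → ℝ) : ℝ :=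
  if (∀ i, x i ∈ Ioo (0 : ℝ) 1) ∧ (∑ i, pseudoInv ψ (x i)) < pseudoInv ψ 0 then
    (∏ i, deriv (fun y => (pseudoInv ψ y).toReal) (x i)) *
      leftDeriv (deriv^[d - 2] ψ) (∑ i, pseudoInv ψ (x i)).toReal
  else 0

/-! ### Generators, their pseudo-inverses, and convergence of copulas -/

section Inverse

variable {ψ : ℝ → ℝ}

/-- The pseudo-inverse `φ` of `ψ` as a real-valued function. The value `∞` that `pseudoInv` may
take at `0` becomes the junk value `0`, so `qinv` is only meaningful on `(0,1]`. -/
def qinv (ψ : ℝ → ℝ) (y : ℝ) : ℝ := (pseudoInv ψ y).toReal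

lemma psiExt_ofReal (ψ : ℝ → ℝ) {z : ℝ} (hz : 0 ≤ z) : psiExt ψ (ENNReal.ofReal z) = ψ z := by
  simp [psiExt, ENNReal.toReal_ofReal hz]

lemma IsGenerator.nonneg (hg : IsGenerator ψ) {z : ℝ} (hz : 0 ≤ z) : 0 ≤ ψ z :=
  (hg.mem_Icc z hz).1

lemma IsGenerator.le_one (hg : IsGenerator ψ) {z : ℝ} (hz : 0 ≤ z) : ψ z ≤ 1 :=
  (hg.mem_Icc z hz).2

lemma IsGenerator.anti (hg : IsGenerator ψ) {x y : ℝ} (hx : 0 ≤ x) (hxy : x ≤ y) : ψ y ≤ ψ x :=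
  hg.antitoneOn hx (hx.trans hxy : (0:ℝ) ≤ y) hxy

lemma IsGenerator.eq_zero_of_le (hg : IsGenerator ψ) {z : ℝ} (hz : 0 ≤ z)
    (h : pseudoInv ψ 0 ≤ ENNReal.ofReal z) : ψ z = 0 := by
  by_contra hne
  have hpos : 0 < ψ z := lt_of_le_of_ne (hg.nonneg hz) (Ne.symm hne)
  have hev : ∀ᶠ w in 𝓝[Ici 0] z, 0 < ψ w := (hg.continuousOn z hz).eventually (lt_mem_nhds hpos)
  obtain ⟨δ, hδ, hball⟩ := Metric.mem_nhdsWithin_iff.1 hev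
  have hle : ENNReal.ofReal (z + δ) ≤ pseudoInv ψ 0 := by
    refine le_sInf fun w hw => ?_
    by_cases hwt : w = ∞
    · simp [hwt]
    · have hw' : ψ w.toReal = 0 := by simpa [psiExt, hwt] using hw
      rw [ENNReal.ofReal_le_iff_le_toReal hwt]
      by_contra! hlt
      rcases le_total w.toReal z with hwz | hwz
      · have := hg.anti ENNReal.toReal_nonneg hwz
        linarith
      · have : 0 < ψ w.toReal := hball ⟨by
          rw [Metric.mem_ball, Real.dist_eq, abs_lt]; constructor <;> linarith,
          ENNReal.toReal_nonneg⟩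
        linarith
  have := (ENNReal.ofReal_le_ofReal_iff hz).1 (hle.trans h)
  linarith

lemma IsGenerator.lt_pseudoInv_zero_iff (hg : IsGenerator ψ) {z : ℝ} (hz : 0 ≤ z) :
    ENNReal.ofReal z < pseudoInv ψ 0 ↔ 0 < ψ z := by
  constructor
  · intro h
    by_contra hn
    have h0 : ψ z = 0 := le_antisymm (not_lt.1 hn) (hg.nonneg hz)
    exact absurd h (not_lt.2 (sInf_le (by
      change psiExt ψ _ = 0
      rw [psiExt_ofReal ψ hz, h0])))
  · intro h
    by_contra hn
    exact h.ne' (hg.eq_zero_of_le hz (not_lt.1 hn))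

lemma IsGenerator.strict (hg : IsGenerator ψ) {x y : ℝ} (hx : 0 ≤ x) (hxy : x < y)
    (h : 0 < ψ x) : ψ y < ψ x := by
  have hy : 0 ≤ y := hx.trans hxy.le
  rcases (hg.nonneg hy).eq_or_lt with h0 | h0
  · rwa [← h0]
  · exact hg.strictAnti hx hxy ((hg.lt_pseudoInv_zero_iff hy).2 h0).le

lemma IsGenerator.lt_of_lt (hg : IsGenerator ψ) {x y : ℝ} (hx : 0 ≤ x) (h : ψ x < ψ y) :
    y < x := by
  by_contra! hc
  exact absurd h (not_lt.2 (hg.anti hx hc))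

lemma IsGenerator.exists_eq (hg : IsGenerator ψ) {y : ℝ} (hy : y ∈ Ioc (0 : ℝ) 1) :
    ∃ z, 0 ≤ z ∧ ψ z = y := by
  obtain ⟨b, hb0, hb⟩ := ((eventually_ge_atTop (0:ℝ)).and
    (hg.tendsto_atTop.eventually (gt_mem_nhds hy.1))).exists
  obtain ⟨z, hz, hzy⟩ := intermediate_value_Icc' hb0 (hg.continuousOn.mono Icc_subset_Ici_self)
    (show y ∈ Icc (ψ b) (ψ 0) from ⟨hb.le, by rw [hg.map_zero]; exact hy.2⟩)
  exact ⟨z, hz.1, hzy⟩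

lemma IsGenerator.pseudoInv_apply (hg : IsGenerator ψ) {z : ℝ} (hz : 0 ≤ z) (h : 0 < ψ z) :
    pseudoInv ψ (ψ z) = ENNReal.ofReal z := by
  have : {w : ℝ≥0∞ | psiExt ψ w = ψ z} = {ENNReal.ofReal z} := by
    ext w
    simp only [Set.mem_ofPred_eq, mem_singleton_iff]
    constructor
    · intro hw
      by_cases hwt : w = ∞
      · simp [psiExt, hwt] at hw; linarith
      · rw [psiExt, if_neg hwt] at hw
        rw [← ENNReal.ofReal_toReal hwt]
        congr 1
        rcases lt_trichotomy w.toReal z with h1 | h1 | h1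
        · have := hg.strict ENNReal.toReal_nonneg h1 (by rw [hw]; exact h)
          linarith
        · exact h1
        · have := hg.strict hz h1 h
          linarith
    · rintro rfl
      exact psiExt_ofReal ψ hz
  rw [pseudoInv, this, sInf_singleton]

lemma qinv_nonneg (ψ : ℝ → ℝ) (y : ℝ) : 0 ≤ qinv ψ y := ENNReal.toReal_nonneg

lemma IsGenerator.qinv_apply (hg : IsGenerator ψ) {z : ℝ} (hz : 0 ≤ z) (h : 0 < ψ z) :
    qinv ψ (ψ z) = z := by
  rw [qinv, hg.pseudoInv_apply hz h, ENNReal.toReal_ofReal hz]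

lemma IsGenerator.apply_qinv (hg : IsGenerator ψ) {y : ℝ} (hy : y ∈ Ioc (0 : ℝ) 1) :
    ψ (qinv ψ y) = y := by
  obtain ⟨z, hz, rfl⟩ := hg.exists_eq hy
  rw [hg.qinv_apply hz hy.1]

lemma IsGenerator.ofReal_qinv (hg : IsGenerator ψ) {y : ℝ} (hy : y ∈ Ioc (0 : ℝ) 1) :
    ENNReal.ofReal (qinv ψ y) = pseudoInv ψ y := by
  obtain ⟨z, hz, rfl⟩ := hg.exists_eq hy
  rw [hg.qinv_apply hz hy.1, hg.pseudoInv_apply hz hy.1]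

lemma IsGenerator.qinv_one (hg : IsGenerator ψ) : qinv ψ 1 = 0 := by
  have := hg.qinv_apply le_rfl (by rw [hg.map_zero]; exact one_pos)
  rwa [hg.map_zero] at this

lemma IsGenerator.qinv_pos (hg : IsGenerator ψ) {y : ℝ} (hy : y ∈ Ioo (0 : ℝ) 1) :
    0 < qinv ψ y := by
  refine lt_of_le_of_ne (qinv_nonneg _ _) fun h => ?_
  have := hg.apply_qinv ⟨hy.1, hy.2.le⟩
  rw [← h, hg.map_zero] at this
  linarith [hy.2]

lemma IsGenerator.qinv_le (hg : IsGenerator ψ) {y z : ℝ} (hy : y ∈ Ioc (0 : ℝ) 1) (hz : 0 ≤ z)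
    (h : ψ z ≤ y) : qinv ψ y ≤ z := by
  by_contra! hlt
  have h1 := hg.apply_qinv hy
  have := hg.anti hz hlt.le
  have h2 : ψ z = y := by linarith
  have := hg.strict hz hlt (by rw [h2]; exact hy.1)
  linarith

lemma IsGenerator.le_qinv (hg : IsGenerator ψ) {y z : ℝ} (hy : y ∈ Ioc (0 : ℝ) 1)
    (h : y ≤ ψ z) : z ≤ qinv ψ y := by
  by_contra! hlt
  have h1 := hg.apply_qinv hy
  have := hg.strict (qinv_nonneg ψ y) hlt (by rw [h1]; exact hy.1)
  linarith

lemma IsGenerator.qinv_antitoneOn (hg : IsGenerator ψ) : AntitoneOn (qinv ψ) (Ioc 0 1) := by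
  intro a ha b hb hab
  exact hg.qinv_le hb (qinv_nonneg _ _) (by rw [hg.apply_qinv ha]; exact hab)

lemma IsGenerator.qinv_strictAntiOn (hg : IsGenerator ψ) :
    StrictAntiOn (qinv ψ) (Ioc 0 1) := by
  intro a ha b hb hab
  refine lt_of_le_of_ne (hg.qinv_antitoneOn ha hb hab.le) fun h => ?_
  have := hg.apply_qinv ha
  rw [← h, hg.apply_qinv hb] at this
  linarith

lemma IsGenerator.sum_pseudoInv (hg : IsGenerator ψ) {k : ℕ} {x : Fin k → ℝ}
    (hx : ∀ i, x i ∈ Ioc (0 : ℝ) 1) :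
    ∑ i, pseudoInv ψ (x i) = ENNReal.ofReal (∑ i, qinv ψ (x i)) := by
  rw [ENNReal.ofReal_sum_of_nonneg fun i _ => qinv_nonneg _ _]
  exact Finset.sum_congr rfl fun i _ => (hg.ofReal_qinv (hx i)).symm

lemma IsGenerator.archCopula_eq (hg : IsGenerator ψ) {d : ℕ} {x : Fin d → ℝ}
    (hx : ∀ i, x i ∈ Ioc (0 : ℝ) 1) : archCopula d ψ x = ψ (∑ i, qinv ψ (x i)) := by
  rw [archCopula, hg.sum_pseudoInv hx,
    psiExt_ofReal ψ (Finset.sum_nonneg fun i _ => qinv_nonneg _ _)]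

lemma IsGenerator.archCopula_eq_zero (hg : IsGenerator ψ) {d : ℕ} {x : Fin d → ℝ} {i : Fin d}
    (hi : x i = 0) : archCopula d ψ x = 0 := by
  have hle : pseudoInv ψ 0 ≤ ∑ j, pseudoInv ψ (x j) := by
    rw [← hi]
    exact Finset.single_le_sum (f := fun j => pseudoInv ψ (x j)) (fun _ _ => zero_le)
      (Finset.mem_univ i)
  rw [archCopula]
  by_cases ht : ∑ j, pseudoInv ψ (x j) = ∞
  · simp [psiExt, ht]
  · rw [← ENNReal.ofReal_toReal ht] at hle ⊢
    rw [psiExt_ofReal ψ ENNReal.toReal_nonneg]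
    exact hg.eq_zero_of_le ENNReal.toReal_nonneg hle

end Inverse

section Convergence

variable {ψ : ℝ → ℝ} {Ψ : ℕ → ℝ → ℝ}

lemma IsGenerator.exists_left (hg : IsGenerator ψ) {z c : ℝ} (hz : 0 < z) (h : ψ z < c) :
    ∃ z', 0 < z' ∧ z' < z ∧ ψ z' < c := by
  have hc : ContinuousAt ψ z := hg.continuousOn.continuousAt (Ici_mem_nhds hz)
  have h1 : ∀ᶠ w in 𝓝[<] z, ψ w < c ∧ 0 < w :=
    nhdsWithin_le_nhds ((hc.eventually (gt_mem_nhds h)).and (lt_mem_nhds hz))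
  obtain ⟨w, hw, hwz⟩ := (h1.and self_mem_nhdsWithin).exists
  exact ⟨w, hw.2, hwz, hw.1⟩

lemma IsGenerator.exists_right (hg : IsGenerator ψ) {z c : ℝ} (hz : 0 ≤ z) (h : c < ψ z) :
    ∃ z', z < z' ∧ c < ψ z' := by
  have hc : ContinuousWithinAt ψ (Ioi z) z :=
    (hg.continuousOn z hz).mono fun w hw => hz.trans (le_of_lt hw)
  obtain ⟨w, hw, hwz⟩ := ((hc.eventually (lt_mem_nhds h)).and self_mem_nhdsWithin).exists
  exact ⟨w, hwz, hw⟩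

/-- Pointwise convergence of generators carries over to their pseudo-inverses, even along a
convergent sequence of arguments. The constant family gives the continuity of `φ`. -/
lemma tendsto_qinv {α : Type*} {l : Filter α} {Φ : α → ℝ → ℝ} (hg : IsGenerator ψ)
    (hG : ∀ a, IsGenerator (Φ a))
    (hconv : ∀ z, 0 ≤ z → Tendsto (fun a => Φ a z) l (𝓝 (ψ z))) {y : ℝ} {v : α → ℝ}
    (hy : y ∈ Ioo (0 : ℝ) 1) (hv : Tendsto v l (𝓝 y)) :
    Tendsto (fun a => qinv (Φ a) (v a)) l (𝓝 (qinv ψ y)) := by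
  have hq := hg.apply_qinv ⟨hy.1, hy.2.le⟩
  have hvm : ∀ᶠ a in l, v a ∈ Ioc (0 : ℝ) 1 :=
    (hv.eventually (Ioo_mem_nhds hy.1 hy.2)).mono fun a h => ⟨h.1, h.2.le⟩
  rw [tendsto_order]
  constructor
  · intro b hb
    rcases lt_or_ge b 0 with hb0 | hb0
    · exact Eventually.of_forall fun a => hb0.trans_le (qinv_nonneg _ _)
    obtain ⟨b', hbb', hb'⟩ := exists_between hb
    have h1 : y < ψ b' := by
      rw [← hq]
      refine hg.strict (hb0.trans hbb'.le) hb' ?_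
      exact lt_of_lt_of_le (by rw [hq]; exact hy.1) (hg.anti (hb0.trans hbb'.le) hb'.le)
    filter_upwards [hvm, hv.eventually_lt (hconv b' (hb0.trans hbb'.le)) h1] with a ha h2
    exact hbb'.trans_le ((hG a).le_qinv ha h2.le)
  · intro b hb
    obtain ⟨b', hb', hbb'⟩ := exists_between hb
    have hb0 : 0 ≤ b' := (qinv_nonneg _ _).trans hb'.le
    have h1 : ψ b' < y := by
      rw [← hq]
      exact hg.strict (qinv_nonneg _ _) hb' (by rw [hq]; exact hy.1)
    filter_upwards [hvm, (hconv b' hb0).eventually_lt hv h1] with a ha h2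
    exact ((hG a).qinv_le ha hb0 h2.le).trans_lt hbb'

lemma IsGenerator.continuousAt_qinv (hg : IsGenerator ψ) {y : ℝ} (hy : y ∈ Ioo (0 : ℝ) 1) :
    ContinuousAt (qinv ψ) y :=
  tendsto_qinv (l := 𝓝 y) (Φ := fun _ => ψ) (v := id) hg (fun _ => hg)
    (fun _ _ => tendsto_const_nhds) hy tendsto_id

/-- Pointwise convergence of monotone functions to a continuous limit is continuous convergence. -/
lemma tendsto_apply (hg : IsGenerator ψ) (hG : ∀ n, IsGenerator (Ψ n))
    (hconv : ∀ z, 0 ≤ z → Tendsto (fun n => Ψ n z) atTop (𝓝 (ψ z))) {z : ℝ} {v : ℕ → ℝ}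
    (hz : 0 ≤ z) (hv0 : ∀ n, 0 ≤ v n) (hv : Tendsto v atTop (𝓝 z)) :
    Tendsto (fun n => Ψ n (v n)) atTop (𝓝 (ψ z)) := by
  rw [tendsto_order]
  constructor
  · intro c hc
    obtain ⟨z', hzz', hz'⟩ := hg.exists_right hz hc
    filter_upwards [hv.eventually (gt_mem_nhds hzz'),
      (hconv z' (hz.trans hzz'.le)).eventually (lt_mem_nhds hz')] with n h1 h2
    exact h2.trans_le ((hG n).anti (hv0 n) h1.le)
  · intro c hc
    rcases hz.eq_or_lt with rfl | hz
    · rw [hg.map_zero] at hc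
      exact Eventually.of_forall fun n => ((hG n).le_one (hv0 n)).trans_lt hc
    obtain ⟨z', hz0, hzz', hz'⟩ := hg.exists_left hz hc
    filter_upwards [hv.eventually (lt_mem_nhds hzz'),
      (hconv z' hz0.le).eventually (gt_mem_nhds hz')] with n h1 h2
    exact ((hG n).anti hz0.le h1.le).trans_lt h2

lemma tendsto_archCopula (hg : IsGenerator ψ) (hG : ∀ n, IsGenerator (Ψ n))
    (hconv : ∀ z, 0 ≤ z → Tendsto (fun n => Ψ n z) atTop (𝓝 (ψ z))) {d : ℕ} {x : Fin d → ℝ}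
    (hx : ∀ i, x i ∈ Icc (0 : ℝ) 1) :
    Tendsto (fun n => archCopula d (Ψ n) x) atTop (𝓝 (archCopula d ψ x)) := by
  by_cases h0 : ∃ i, x i = 0
  · obtain ⟨i, hi⟩ := h0
    simp only [hg.archCopula_eq_zero hi, (hG _).archCopula_eq_zero hi, tendsto_const_nhds]
  · push Not at h0
    have hx' : ∀ i, x i ∈ Ioc (0 : ℝ) 1 := fun i =>
      ⟨lt_of_le_of_ne (hx i).1 (h0 i).symm, (hx i).2⟩
    simp only [hg.archCopula_eq hx', (hG _).archCopula_eq hx']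
    refine tendsto_apply hg hG hconv (Finset.sum_nonneg fun i _ => qinv_nonneg _ _)
      (fun n => Finset.sum_nonneg fun i _ => qinv_nonneg _ _) (tendsto_finsetSum _ fun i _ => ?_)
    rcases (hx' i).2.eq_or_lt with h1 | h1
    · simp only [h1, hg.qinv_one, (hG _).qinv_one, tendsto_const_nhds]
    · exact tendsto_qinv hg hG hconv ⟨(hx' i).1, h1⟩ tendsto_const_nhds

/-- Convergence of the bivariate copulas propagates convergence of `Ψ n` from `z` and `w` to
`z + w`: the points `z`, `w` are compared with `φₙ(ψ z')`, `φₙ(ψ w')` for `z'`, `w'` nearby. -/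
lemma tendsto_gen_add (hg : IsGenerator ψ) (hG : ∀ n, IsGenerator (Ψ n))
    (h2 : ∀ x ∈ Ioc (0 : ℝ) 1, ∀ y ∈ Ioc (0 : ℝ) 1,
      Tendsto (fun n => Ψ n (qinv (Ψ n) x + qinv (Ψ n) y)) atTop (𝓝 (ψ (qinv ψ x + qinv ψ y))))
    {z w : ℝ} (hz : 0 < z) (hw : 0 < w) (hcz : Tendsto (fun n => Ψ n z) atTop (𝓝 (ψ z)))
    (hcw : Tendsto (fun n => Ψ n w) atTop (𝓝 (ψ w))) :
    Tendsto (fun n => Ψ n (z + w)) atTop (𝓝 (ψ (z + w))) := by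
  have key : ∀ z' w', 0 ≤ z' → 0 ≤ w' → 0 < ψ z' → 0 < ψ w' →
      Tendsto (fun n => Ψ n (qinv (Ψ n) (ψ z') + qinv (Ψ n) (ψ w'))) atTop
        (𝓝 (ψ (z' + w'))) := by
    intro z' w' hz' hw' hpz hpw
    have := h2 (ψ z') ⟨hpz, hg.le_one hz'⟩ (ψ w') ⟨hpw, hg.le_one hw'⟩
    rwa [hg.qinv_apply hz' hpz, hg.qinv_apply hw' hpw] at this
  rw [tendsto_order]
  constructor
  · intro c hc
    rcases lt_or_ge c 0 with hc0 | hc0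
    · exact Eventually.of_forall fun n => hc0.trans_le ((hG n).nonneg (by positivity))
    obtain ⟨t, ht, htc⟩ := hg.exists_right (by positivity) hc
    set e := (t - (z + w)) / 2 with he
    have he0 : 0 < e := by rw [he]; linarith
    have hsum : (z + e) + (w + e) = t := by rw [he]; ring
    have hpt : 0 < ψ t := hc0.trans_lt htc
    have hpz : 0 < ψ (z + e) := hpt.trans_le (hg.anti (by positivity) (by linarith))
    have hpw : 0 < ψ (w + e) := hpt.trans_le (hg.anti (by positivity) (by linarith))
    have hk := key (z + e) (w + e) (by positivity) (by positivity) hpz hpw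
    rw [hsum] at hk
    have hsz : ψ (z + e) < ψ z := hg.strict hz.le (by linarith)
      (hpz.trans_le (hg.anti hz.le (by linarith)))
    have hsw : ψ (w + e) < ψ w := hg.strict hw.le (by linarith)
      (hpw.trans_le (hg.anti hw.le (by linarith)))
    filter_upwards [hk.eventually (lt_mem_nhds htc), hcz.eventually (lt_mem_nhds hsz),
      hcw.eventually (lt_mem_nhds hsw)] with n h1 h3 h4
    refine h1.trans_le ((hG n).anti (by positivity) (add_le_add ?_ ?_))
    · exact (hG n).le_qinv ⟨hpz, hg.le_one (by positivity)⟩ h3.le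
    · exact (hG n).le_qinv ⟨hpw, hg.le_one (by positivity)⟩ h4.le
  · intro c hc
    obtain ⟨t, ht0, ht, htc⟩ := hg.exists_left (by positivity) hc
    rcases (hg.nonneg hz.le).eq_or_lt with h0 | hpz
    · have hc0 : 0 < c := (hg.nonneg (by positivity)).trans_lt hc
      rw [← h0] at hcz
      filter_upwards [hcz.eventually (gt_mem_nhds hc0)] with n hn
      exact ((hG n).anti hz.le (by linarith)).trans_lt hn
    rcases (hg.nonneg hw.le).eq_or_lt with h0 | hpw
    · have hc0 : 0 < c := (hg.nonneg (by positivity)).trans_lt hc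
      rw [← h0] at hcw
      filter_upwards [hcw.eventually (gt_mem_nhds hc0)] with n hn
      exact ((hG n).anti hw.le (by linarith)).trans_lt hn
    -- shrink `z`, `w` proportionally so that they add up to `t`
    have hr : t / (z + w) < 1 := by rw [div_lt_one (by positivity)]; exact ht
    set r := t / (z + w) with hrdef
    have hr0 : 0 < r := by positivity
    have hsum : r * z + r * w = t := by rw [hrdef]; field_simp
    have hz' : r * z < z := by nlinarith
    have hw' : r * w < w := by nlinarith
    have hpz' : 0 < ψ (r * z) := hpz.trans_le (hg.anti (by positivity) hz'.le)
    have hpw' : 0 < ψ (r * w) := hpw.trans_le (hg.anti (by positivity) hw'.le)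
    have hk := key (r * z) (r * w) (by positivity) (by positivity) hpz' hpw'
    rw [hsum] at hk
    filter_upwards [hk.eventually (gt_mem_nhds htc),
      hcz.eventually (gt_mem_nhds (hg.strict (by positivity) hz' hpz')),
      hcw.eventually (gt_mem_nhds (hg.strict (by positivity) hw' hpw'))] with n h1 h3 h4
    refine lt_of_le_of_lt ((hG n).anti (add_nonneg (qinv_nonneg _ _) (qinv_nonneg _ _))
      (add_le_add ?_ ?_)) h1
    · exact (hG n).qinv_le ⟨hpz', hg.le_one (by positivity)⟩ hz.le h3.le
    · exact (hG n).qinv_le ⟨hpw', hg.le_one (by positivity)⟩ hw.le h4.le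

/-- Convergence of the bivariate copulas on the diagonal propagates convergence of `Ψ n` from `z`
to `z / 2`: `φₙ(ψ t)` is on the same side of `z / 2` as `t`, since its double is on the same side
of `z` as `2t`. -/
lemma tendsto_gen_half (hg : IsGenerator ψ) (hG : ∀ n, IsGenerator (Ψ n))
    (h2 : ∀ x ∈ Ioc (0 : ℝ) 1, ∀ y ∈ Ioc (0 : ℝ) 1,
      Tendsto (fun n => Ψ n (qinv (Ψ n) x + qinv (Ψ n) y)) atTop (𝓝 (ψ (qinv ψ x + qinv ψ y))))
    {z : ℝ} (hz : 0 < z) (hpz : 0 < ψ z) (hcz : Tendsto (fun n => Ψ n z) atTop (𝓝 (ψ z))) :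
    Tendsto (fun n => Ψ n (z / 2)) atTop (𝓝 (ψ (z / 2))) := by
  have key : ∀ z', 0 ≤ z' → 0 < ψ z' →
      Tendsto (fun n => Ψ n (qinv (Ψ n) (ψ z') + qinv (Ψ n) (ψ z'))) atTop
        (𝓝 (ψ (z' + z'))) := by
    intro z' hz' hpz
    have := h2 (ψ z') ⟨hpz, hg.le_one hz'⟩ (ψ z') ⟨hpz, hg.le_one hz'⟩
    rwa [hg.qinv_apply hz' hpz] at this
  have hph : 0 < ψ (z / 2) := hpz.trans_le (hg.anti (by positivity) (by linarith))
  rw [tendsto_order]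
  constructor
  · intro c hc
    obtain ⟨t, ht, htc⟩ := hg.exists_right (by positivity) (max_lt hc hph)
    have ht0 : 0 < t := by linarith
    have hpt : 0 < ψ t := (le_max_right _ _).trans_lt htc
    have hlt : ψ (t + t) < ψ z := hg.strict hz.le (by linarith) hpz
    filter_upwards [(key t ht0.le hpt).eventually_lt hcz hlt] with n hn
    have h := (hG n).lt_of_lt (add_nonneg (qinv_nonneg _ _) (qinv_nonneg _ _)) hn
    refine ((le_max_left _ _).trans_lt htc).trans_le ?_
    rw [← (hG n).apply_qinv ⟨hpt, hg.le_one ht0.le⟩]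
    exact (hG n).anti (by positivity) (by linarith)
  · intro c hc
    obtain ⟨t, ht0, ht, htc⟩ := hg.exists_left (by positivity) hc
    have hpt : 0 < ψ t := hph.trans_le (hg.anti ht0.le ht.le)
    have hlt : ψ z < ψ (t + t) := hg.strict (by positivity) (by linarith)
      (hpz.trans_le (hg.anti (by positivity) (by linarith)))
    filter_upwards [hcz.eventually_lt (key t ht0.le hpt) hlt] with n hn
    have h := (hG n).lt_of_lt hz.le hn
    refine lt_of_le_of_lt ?_ htc
    rw [← (hG n).apply_qinv ⟨hpt, hg.le_one ht0.le⟩]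
    exact (hG n).anti (qinv_nonneg _ _) (by linarith)

/-- Under the common normalization `ψ(1) = 1/2`, convergence of the bivariate copulas
`ψ(φ(x) + φ(y))` forces pointwise convergence of the generators: it holds at `1`, then at the
powers of `1/2` by halving, at all dyadic numbers by addition, and everywhere by monotonicity. -/
lemma tendsto_generator (hg : IsGenerator ψ) (hG : ∀ n, IsGenerator (Ψ n))
    (hn : ψ 1 = 1 / 2) (hN : ∀ n, Ψ n 1 = 1 / 2)
    (h2 : ∀ x ∈ Ioc (0 : ℝ) 1, ∀ y ∈ Ioc (0 : ℝ) 1,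
      Tendsto (fun n => Ψ n (qinv (Ψ n) x + qinv (Ψ n) y)) atTop (𝓝 (ψ (qinv ψ x + qinv ψ y))))
    {z : ℝ} (hz : 0 ≤ z) : Tendsto (fun n => Ψ n z) atTop (𝓝 (ψ z)) := by
  have hpow : ∀ j : ℕ, Tendsto (fun n => Ψ n ((1 / 2) ^ j)) atTop (𝓝 (ψ ((1 / 2) ^ j))) := by
    intro j
    induction j with
    | zero => simp [hn, hN]
    | succ j ih =>
      have := tendsto_gen_half hg hG h2 (by positivity) ?_ ih
      · rwa [show ((1:ℝ) / 2) ^ j / 2 = (1 / 2) ^ (j + 1) by ring] at this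
      · refine lt_of_lt_of_le ?_ (hg.anti (by positivity)
          (pow_le_one₀ (by norm_num) (by norm_num) : ((1:ℝ) / 2) ^ j ≤ 1))
        rw [hn]; norm_num
  have hdy : ∀ j k : ℕ, Tendsto (fun n => Ψ n (k * (1 / 2) ^ j)) atTop
      (𝓝 (ψ (k * (1 / 2) ^ j))) := by
    intro j k
    induction k with
    | zero => simp [hg.map_zero, (hG _).map_zero]
    | succ k ih =>
      rcases Nat.eq_zero_or_pos k with rfl | hk
      · simpa using hpow j
      · have hk' : (0:ℝ) < k := by exact_mod_cast hk
        have := tendsto_gen_add hg hG h2 (by positivity) (by positivity) ih (hpow j)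
        rw [show (((k + 1 : ℕ)) : ℝ) * (1 / 2) ^ j = k * (1 / 2) ^ j + (1 / 2) ^ j by
          push_cast; ring]
        exact this
  have hdense : ∀ a b : ℝ, 0 ≤ a → a < b → ∃ j k : ℕ, a < k * (1 / 2) ^ j ∧
      (k : ℝ) * (1 / 2) ^ j < b := by
    intro a b ha hab
    obtain ⟨j, hj⟩ := exists_pow_lt_of_lt_one (sub_pos.2 hab) (by norm_num : (1:ℝ) / 2 < 1)
    have hp : (0:ℝ) < (1 / 2) ^ j := by positivity
    refine ⟨j, ⌊a / (1 / 2) ^ j⌋₊ + 1, ?_, ?_⟩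
    · have := Nat.lt_floor_add_one (a / (1 / 2) ^ j)
      rw [div_lt_iff₀ hp] at this
      push_cast; exact this
    · have := Nat.floor_le (div_nonneg ha hp.le)
      rw [le_div_iff₀ hp] at this
      push_cast; linarith
  rw [tendsto_order]
  constructor
  · intro c hc
    obtain ⟨t, ht, htc⟩ := hg.exists_right hz hc
    obtain ⟨j, k, h1, h3⟩ := hdense z t hz ht
    filter_upwards [(hdy j k).eventually
      (lt_mem_nhds (htc.trans_le (hg.anti (hz.trans h1.le) h3.le)))] with n hn
    exact hn.trans_le ((hG n).anti hz h1.le)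
  · intro c hc
    rcases hz.eq_or_lt with rfl | hz
    · rw [hg.map_zero] at hc
      exact Eventually.of_forall fun n => ((hG n).le_one le_rfl).trans_lt hc
    obtain ⟨t, ht0, ht, htc⟩ := hg.exists_left hz hc
    obtain ⟨j, k, h1, h3⟩ := hdense t z ht0.le ht
    filter_upwards [(hdy j k).eventually
      (gt_mem_nhds ((hg.anti ht0.le h1.le).trans_lt htc))] with n hn
    exact ((hG n).anti (ht0.le.trans h1.le) h3.le).trans_lt hn

end Convergence

/-! ### The tower of signed derivatives -/

section Tower

variable {ψ : ℝ → ℝ} {m : ℕ}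

/-- The signed derivative `(-1)^k ψ⁽ᵏ⁾`. -/
def sgnDeriv (ψ : ℝ → ℝ) (k : ℕ) (z : ℝ) : ℝ := (-1) ^ k * deriv^[k] ψ z

lemma IsdMonotoneGenerator.hasDerivAt (H : IsdMonotoneGenerator (m + 2) ψ) {k : ℕ} (hk : k < m)
    {z : ℝ} (hz : 0 < z) : HasDerivAt (sgnDeriv ψ k) (-sgnDeriv ψ (k + 1) z) z := by
  have h := ((H.differentiable k hk z hz).hasDerivAt).const_mul ((-1 : ℝ) ^ k)
  have e : -sgnDeriv ψ (k + 1) z = (-1 : ℝ) ^ k * deriv (deriv^[k] ψ) z := by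
    rw [sgnDeriv, Function.iterate_succ_apply']; ring
  rw [e]
  exact h

/-- A function whose derivative is eventually at least `c > 0` exceeds any bound. -/
lemma grow {f f' : ℝ → ℝ} {c z₀ : ℝ} (hc : 0 < c) (hd : ∀ z, z₀ ≤ z → HasDerivAt f (f' z) z)
    (h : ∀ z, z₀ ≤ z → c ≤ f' z) (M : ℝ) : ∃ z₁, z₀ ≤ z₁ ∧ ∀ z, z₁ ≤ z → M ≤ f z := by
  refine ⟨max z₀ (z₀ + (M - f z₀) / c), le_max_left _ _, fun z hz => ?_⟩
  have hz0 : z₀ ≤ z := (le_max_left _ _).trans hz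
  have hz1 := (le_max_right _ _).trans hz
  have := (convex_Ici z₀).mul_sub_le_image_sub_of_le_deriv (f := f) (C := c)
    (fun x hx => (hd x hx).continuousAt.continuousWithinAt)
    (fun x hx => (hd x (interior_subset hx)).differentiableAt.differentiableWithinAt)
    (fun x hx => by rw [(hd x (interior_subset hx)).deriv]; exact h x (interior_subset hx))
    z₀ self_mem_Ici z hz0 hz0
  have h2 : (M - f z₀) / c * c = M - f z₀ := div_mul_cancel₀ _ hc.ne'
  nlinarith

/-- No derivative of positive order stays away from `0` with constant sign: integrating down to
order zero would make the bounded function `ψ` unbounded. The factor `ε` carries the sign, which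
flips at each integration. -/
lemma IsdMonotoneGenerator.no_growth (H : IsdMonotoneGenerator (m + 2) ψ) :
    ∀ k, k + 1 ≤ m → ∀ ε c z₀ : ℝ, 0 < c → 0 < z₀ →
      ¬ ∀ z, z₀ ≤ z → c ≤ ε * sgnDeriv ψ (k + 1) z := by
  intro k
  induction k with
  | zero =>
    intro hk ε c z₀ hc hz₀ h
    obtain ⟨z₁, hz₁, hM⟩ := grow (f := fun z => -ε * sgnDeriv ψ 0 z) hc
      (fun z hz => ((H.hasDerivAt hk (hz₀.trans_le hz)).const_mul (-ε)))
      (fun z hz => by have := h z hz; linarith) (|ε| + 1)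
    have h1 := hM z₁ le_rfl
    have hz : 0 ≤ z₁ := hz₀.le.trans hz₁
    have h2 : sgnDeriv ψ 0 z₁ = ψ z₁ := by simp [sgnDeriv]
    rw [h2] at h1
    have h3 := H.toIsGenerator.nonneg hz
    have h4 := H.toIsGenerator.le_one hz
    have h5 := neg_abs_le ε
    have h6 := abs_nonneg ε
    nlinarith
  | succ k ih =>
    intro hk ε c z₀ hc hz₀ h
    obtain ⟨z₁, hz₁, hM⟩ := grow (f := fun z => -ε * sgnDeriv ψ (k + 1) z) hc
      (fun z hz => ((H.hasDerivAt hk (hz₀.trans_le hz)).const_mul (-ε)))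
      (fun z hz => by have := h z hz; linarith) 1
    exact ih (by omega) (-ε) 1 z₁ one_pos (hz₀.trans_le hz₁) hM

lemma IsdMonotoneGenerator.sgnDeriv_antitoneOn_of_nonneg (H : IsdMonotoneGenerator (m + 2) ψ)
    {k : ℕ} (hk : k < m) (h : ∀ z, 0 < z → 0 ≤ sgnDeriv ψ (k + 1) z) :
    AntitoneOn (sgnDeriv ψ k) (Ioi 0) := by
  refine antitoneOn_of_deriv_nonpos (convex_Ioi 0)
    (fun x hx => (H.hasDerivAt hk hx).continuousAt.continuousWithinAt)
    (fun x hx => (H.hasDerivAt hk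
      (interior_subset hx)).differentiableAt.differentiableWithinAt) fun x hx => ?_
  rw [(H.hasDerivAt hk (interior_subset hx)).deriv]
  linarith [h x (interior_subset hx)]

/-- All `(-1)^k ψ⁽ᵏ⁾` with `k ≤ m` are non-negative and non-increasing. The hypothesis gives this
for `k = m` only, and the induction runs downwards in `k = m - j`. -/
lemma IsdMonotoneGenerator.sgnDeriv_nonneg_antitoneOn (H : IsdMonotoneGenerator (m + 2) ψ) :
    ∀ j k, k + j = m →
      (∀ z, 0 < z → 0 ≤ sgnDeriv ψ k z) ∧ AntitoneOn (sgnDeriv ψ k) (Ioi 0) := by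
  intro j
  induction j with
  | zero =>
    rintro k rfl
    exact ⟨H.nonneg, H.antitoneOn⟩
  | succ j ih =>
    intro k hk
    have hkm : k < m := by omega
    have hanti := H.sgnDeriv_antitoneOn_of_nonneg hkm (ih (k + 1) (by omega)).1
    refine ⟨fun z hz => ?_, hanti⟩
    rcases k with _ | k
    · simpa [sgnDeriv] using H.toIsGenerator.nonneg hz.le
    · by_contra! hneg
      refine H.no_growth k hkm.le (-1) (-sgnDeriv ψ (k + 1) z) z (by linarith) hz fun w hw => ?_
      have := hanti hz (hz.trans_le hw : (0:ℝ) < w) hw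
      linarith

lemma IsdMonotoneGenerator.sgnDeriv_nonneg (H : IsdMonotoneGenerator (m + 2) ψ) {k : ℕ}
    (hk : k ≤ m) {z : ℝ} (hz : 0 < z) : 0 ≤ sgnDeriv ψ k z :=
  (H.sgnDeriv_nonneg_antitoneOn (m - k) k (by omega)).1 z hz

lemma IsdMonotoneGenerator.sgnDeriv_antitoneOn (H : IsdMonotoneGenerator (m + 2) ψ) {k : ℕ}
    (hk : k ≤ m) : AntitoneOn (sgnDeriv ψ k) (Ioi 0) :=
  (H.sgnDeriv_nonneg_antitoneOn (m - k) k (by omega)).2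

lemma IsdMonotoneGenerator.continuousOn_sgnDeriv (H : IsdMonotoneGenerator (m + 2) ψ) {k : ℕ}
    (hk : k ≤ m) : ContinuousOn (sgnDeriv ψ k) (Ioi 0) := by
  rcases hk.eq_or_lt with rfl | hk
  · exact H.convexOn.continuousOn isOpen_Ioi
  · exact fun x hx => (H.hasDerivAt hk hx).continuousAt.continuousWithinAt

lemma IsdMonotoneGenerator.sgnDeriv_eq_zero (H : IsdMonotoneGenerator (m + 2) ψ) {z : ℝ}
    (hz : 0 < z) (h0 : ψ z = 0) {k : ℕ} (hk : k ≤ m) : sgnDeriv ψ k z = 0 := by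
  induction k with
  | zero => simpa [sgnDeriv] using h0
  | succ k ih =>
    have hk' : k < m := hk
    have hmin : IsLocalMin (sgnDeriv ψ k) z := by
      filter_upwards [lt_mem_nhds hz] with w hw
      rw [ih hk'.le]
      exact H.sgnDeriv_nonneg hk'.le hw
    have := hmin.hasDerivAt_eq_zero (H.hasDerivAt hk' hz)
    linarith

lemma IsdMonotoneGenerator.sgnDeriv_tendsto (H : IsdMonotoneGenerator (m + 2) ψ) {k : ℕ}
    (hk : k ≤ m) : Tendsto (sgnDeriv ψ k) atTop (𝓝 0) := by
  rcases k with _ | k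
  · have : sgnDeriv ψ 0 = ψ := by ext; simp [sgnDeriv]
    rw [this]
    exact H.toIsGenerator.tendsto_atTop
  rw [tendsto_order]
  constructor
  · intro c hc
    filter_upwards [eventually_gt_atTop 0] with z hz
    exact hc.trans_le (H.sgnDeriv_nonneg hk hz)
  · intro c hc
    have := H.no_growth k hk 1 c 1 hc one_pos
    push Not at this
    obtain ⟨z₀, h1, h2⟩ := this
    rw [one_mul] at h2
    filter_upwards [eventually_ge_atTop z₀] with z hz
    have h0 : (0:ℝ) < z₀ := by linarith
    exact (H.sgnDeriv_antitoneOn hk h0 (h0.trans_le hz : (0:ℝ) < z) hz).trans_lt h2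

/-- The tower of signed derivatives of `ψ`: `ψ` itself for `k = 0`, `(-1)^k ψ⁽ᵏ⁾` for
`1 ≤ k ≤ m`, and `(-1)^(m+1) D⁻ψ⁽ᵐ⁾` for `k = m + 1`, the dimension being `m + 2`. For `k ≥ 1` it is
set to `0` at non-positive points and wherever `ψ` vanishes; at the first zero of `ψ` the left
derivative may be nonzero, and the density ignores it there. -/
def tower (ψ : ℝ → ℝ) (m k : ℕ) (z : ℝ) : ℝ :=
  if k = 0 then ψ z
  else if 0 < z ∧ 0 < ψ z then
    if k ≤ m then sgnDeriv ψ k z else (-1) ^ (m + 1) * leftDeriv (deriv^[m] ψ) z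
  else 0

lemma tower_zero (ψ : ℝ → ℝ) (m : ℕ) : tower ψ m 0 = ψ := by
  ext z; simp [tower]

lemma IsdMonotoneGenerator.tower_eq (H : IsdMonotoneGenerator (m + 2) ψ) {k : ℕ}
    (hk : k ≤ m) {z : ℝ} (hz : 0 < z) : tower ψ m k z = sgnDeriv ψ k z := by
  rcases k with _ | k
  · simp [tower, sgnDeriv]
  · rcases (H.toIsGenerator.nonneg hz.le).eq_or_lt with h0 | h0
    · rw [H.sgnDeriv_eq_zero hz h0.symm hk]
      simp [tower, ← h0]
    · simp [tower, hz, h0, hk]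

lemma tower_top (ψ : ℝ → ℝ) (m : ℕ) {z : ℝ} (hz : 0 < z) (hp : 0 < ψ z) :
    tower ψ m (m + 1) z = -derivWithin (sgnDeriv ψ m) (Iio z) z := by
  have : derivWithin (sgnDeriv ψ m) (Iio z) z = (-1) ^ m * leftDeriv (deriv^[m] ψ) z := by
    rw [leftDeriv, ← derivWithin_const_mul_field]; rfl
  rw [this]
  simp [tower, hz, hp]
  ring

lemma tower_eq_zero {k : ℕ} {z : ℝ} (h : ψ z = 0) : tower ψ m k z = 0 := by
  simp [tower, h]

lemma tower_of_nonpos {k : ℕ} {z : ℝ} (hz : z ≤ 0) : tower ψ m (k + 1) z = 0 := by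
  simp [tower, not_lt.2 hz]

/-- Each level of the tower is, up to sign, a slope of the level below. This is the mean value
theorem for `k < m` and convexity of `(-1)^m ψ⁽ᵐ⁾` for `k = m`; it is the only property of the top
level that the limit theorems use. -/
lemma IsdMonotoneGenerator.slope_le (H : IsdMonotoneGenerator (m + 2) ψ) {k : ℕ} (hk : k ≤ m)
    {a b : ℝ} (ha : 0 < a) (hab : a < b) :
    tower ψ m k a - tower ψ m k b ≤ tower ψ m (k + 1) a * (b - a) ∧
    tower ψ m (k + 1) b * (b - a) ≤ tower ψ m k a - tower ψ m k b := by
  have hb : 0 < b := ha.trans hab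
  rw [H.tower_eq hk ha, H.tower_eq hk hb]
  rcases hk.eq_or_lt with rfl | hk'
  · have hcx : ConvexOn ℝ (Ioi 0) (sgnDeriv ψ k) := H.convexOn
    constructor
    · rcases (H.toIsGenerator.nonneg ha.le).eq_or_lt with h0 | h0
      · have h0b : ψ b = 0 := le_antisymm (by rw [h0]; exact H.toIsGenerator.anti ha.le hab.le)
          (H.toIsGenerator.nonneg hb.le)
        rw [tower_eq_zero h0.symm, H.sgnDeriv_eq_zero ha h0.symm le_rfl,
          H.sgnDeriv_eq_zero hb h0b le_rfl]
        simp
      · rw [tower_top ψ k ha h0]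
        have hai : a ∈ interior (Ioi (0:ℝ)) := by rwa [interior_Ioi]
        have h1 := (hcx.leftDeriv_le_rightDeriv_of_mem_interior hai).trans
          (hcx.rightDeriv_le_slope_of_mem_interior hai hb hab)
        rw [slope_def_field, le_div_iff₀ (by linarith)] at h1
        linarith
    · rcases (H.toIsGenerator.nonneg hb.le).eq_or_lt with h0 | h0
      · rw [tower_eq_zero h0.symm]
        have := H.sgnDeriv_antitoneOn le_rfl ha hb hab.le
        linarith
      · rw [tower_top ψ k hb h0]
        have hbi : b ∈ interior (Ioi (0:ℝ)) := by rwa [interior_Ioi]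
        have h1 := hcx.slope_le_leftDeriv_of_mem_interior ha hbi hab
        rw [slope_def_field, div_le_iff₀ (by linarith)] at h1
        linarith
  · have hk1 : k + 1 ≤ m := hk'
    rw [H.tower_eq hk1 ha, H.tower_eq hk1 hb]
    obtain ⟨c, hc, hcd⟩ := exists_hasDerivAt_eq_slope (sgnDeriv ψ k)
      (fun z => -sgnDeriv ψ (k + 1) z) hab
      (fun x hx => (H.hasDerivAt hk' (ha.trans_le hx.1)).continuousAt.continuousWithinAt)
      (fun x hx => H.hasDerivAt hk' (ha.trans hx.1))
    have hc0 : (0:ℝ) < c := ha.trans hc.1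
    have h1 := H.sgnDeriv_antitoneOn hk1 ha hc0 hc.1.le
    have h2 := H.sgnDeriv_antitoneOn hk1 hc0 hb hc.2.le
    rw [eq_div_iff (by linarith)] at hcd
    constructor <;> nlinarith

lemma IsdMonotoneGenerator.tower_nonneg_antitoneOn (H : IsdMonotoneGenerator (m + 2) ψ) {k : ℕ}
    (hk : k ≤ m + 1) :
    (∀ z, 0 < z → 0 ≤ tower ψ m k z) ∧ AntitoneOn (tower ψ m k) (Ioi 0) := by
  rcases Nat.lt_or_ge m k with hmk | hmk
  · obtain rfl : k = m + 1 := by omega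
    constructor
    · intro z hz
      have h1 := (H.slope_le le_rfl hz (lt_add_one z)).1
      have h2 := H.sgnDeriv_antitoneOn le_rfl hz (by positivity : (0:ℝ) < z + 1)
        (lt_add_one z).le
      rw [H.tower_eq le_rfl hz, H.tower_eq le_rfl (by positivity)] at h1
      linarith
    · intro a ha b hb hab
      rcases hab.eq_or_lt with rfl | hab
      · exact le_rfl
      have h1 := H.slope_le le_rfl ha hab
      have h2 : 0 < b - a := by linarith
      exact le_of_mul_le_mul_right (h1.2.trans h1.1) h2
  · constructor
    · intro z hz
      rw [H.tower_eq hmk hz]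
      exact H.sgnDeriv_nonneg hmk hz
    · exact (H.sgnDeriv_antitoneOn hmk).congr fun z hz => (H.tower_eq hmk hz).symm

lemma IsdMonotoneGenerator.tower_nonneg (H : IsdMonotoneGenerator (m + 2) ψ) {k : ℕ}
    (hk : k ≤ m) (z : ℝ) : 0 ≤ tower ψ m (k + 1) z := by
  rcases le_or_gt z 0 with hz | hz
  · rw [tower_of_nonpos hz]
  · exact (H.tower_nonneg_antitoneOn (by omega)).1 z hz

lemma IsdMonotoneGenerator.tower_continuousOn (H : IsdMonotoneGenerator (m + 2) ψ) {k : ℕ}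
    (hk : k ≤ m) : ContinuousOn (tower ψ m k) (Ioi 0) :=
  (H.continuousOn_sgnDeriv hk).congr fun _ hz => H.tower_eq hk hz

lemma IsdMonotoneGenerator.tower_tendsto (H : IsdMonotoneGenerator (m + 2) ψ) {k : ℕ}
    (hk : k ≤ m) : Tendsto (tower ψ m k) atTop (𝓝 0) :=
  (H.sgnDeriv_tendsto hk).congr' <| by
    filter_upwards [eventually_gt_atTop 0] with z hz
    exact (H.tower_eq hk hz).symm

lemma measurable_of_antitoneOn {f : ℝ → ℝ} {I : Set ℝ} (hI : I.OrdConnected)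
    (hf : AntitoneOn f I) (h0 : ∀ z, 0 ≤ f z) (hout : ∀ z, z ∉ I → f z = 0) :
    Measurable f := by
  refine measurable_of_Ioi fun a => ?_
  rcases lt_or_ge a 0 with ha | ha
  · have : f ⁻¹' Ioi a = univ := eq_univ_of_forall fun z => ha.trans_le (h0 z)
    rw [this]; exact MeasurableSet.univ
  · refine Set.OrdConnected.measurableSet ⟨fun x hx y hy z hz => ?_⟩
    have hmem : ∀ w, a < f w → w ∈ I := fun w hw => by
      by_contra hn
      rw [hout w hn] at hw
      linarith
    have hzI := hI.out (hmem x hx) (hmem y hy) hz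
    exact lt_of_lt_of_le (show a < f y from hy) (hf hzI (hmem y hy) hz.2)

lemma IsdMonotoneGenerator.tower_measurable (H : IsdMonotoneGenerator (m + 2) ψ) {k : ℕ}
    (hk : k ≤ m) : Measurable (tower ψ m (k + 1)) :=
  measurable_of_antitoneOn ordConnected_Ioi (H.tower_nonneg_antitoneOn (by omega)).2
    (H.tower_nonneg hk) fun _ hz => tower_of_nonpos (not_lt.1 hz)

lemma IsdMonotoneGenerator.countable_discont (H : IsdMonotoneGenerator (m + 2) ψ) {k : ℕ}
    (hk : k ≤ m) : {z ∈ Ioi (0 : ℝ) | ¬ ContinuousAt (tower ψ m (k + 1)) z}.Countable := by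
  refine ((H.tower_nonneg_antitoneOn (k := k + 1)
    (by omega)).2.countable_not_continuousWithinAt).mono ?_
  rintro z ⟨hz, hc⟩
  exact ⟨hz, fun h => hc (h.continuousAt (Ioi_mem_nhds hz))⟩

lemma IsdMonotoneGenerator.tower_hasDerivAt (H : IsdMonotoneGenerator (m + 2) ψ) {k : ℕ}
    (hk : k ≤ m) {z : ℝ} (hz : 0 < z) (hc : ContinuousAt (tower ψ m (k + 1)) z) :
    HasDerivAt (tower ψ m k) (-tower ψ m (k + 1) z) z := by
  rw [hasDerivAt_iff_tendsto_slope]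
  have hc' : Tendsto (fun w => |tower ψ m (k + 1) w - tower ψ m (k + 1) z|) (𝓝[≠] z) (𝓝 0) := by
    have := ((hc.sub_const (tower ψ m (k + 1) z)).abs).mono_left
      (nhdsWithin_le_nhds (s := {z}ᶜ))
    simpa using this
  rw [tendsto_iff_dist_tendsto_zero]
  refine squeeze_zero' (Eventually.of_forall fun _ => dist_nonneg) ?_ hc'
  filter_upwards [self_mem_nhdsWithin, nhdsWithin_le_nhds (lt_mem_nhds hz)] with w hw hw0
  rw [Real.dist_eq, slope_def_field]
  rcases lt_or_gt_of_ne (hw : w ≠ z) with h | h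
  · have h1 := H.slope_le hk hw0 h
    have h2 : (tower ψ m k w - tower ψ m k z) / (w - z) =
        -((tower ψ m k w - tower ψ m k z) / (z - w)) := by
      rw [← div_neg, neg_sub]
    have h3 := (div_le_iff₀ (sub_pos.2 h)).2 h1.1
    have h4 := (le_div_iff₀ (sub_pos.2 h)).2 h1.2
    rw [h2, abs_le]
    have := le_abs_self (tower ψ m (k + 1) w - tower ψ m (k + 1) z)
    constructor <;> linarith
  · have h1 := H.slope_le hk hz h
    have h2 : (tower ψ m k w - tower ψ m k z) / (w - z) =
        -((tower ψ m k z - tower ψ m k w) / (w - z)) := by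
      rw [← neg_div, neg_sub]
    have h3 := (div_le_iff₀ (sub_pos.2 h)).2 h1.1
    have h4 := (le_div_iff₀ (sub_pos.2 h)).2 h1.2
    rw [h2, abs_le]
    have := neg_abs_le (tower ψ m (k + 1) w - tower ψ m (k + 1) z)
    constructor <;> linarith

/-- The fundamental theorem of calculus for one step of the tower; the derivative may fail to
exist at the countably many discontinuities of the upper level. -/
lemma IsdMonotoneGenerator.lintegral_Ioc_tower (H : IsdMonotoneGenerator (m + 2) ψ) {k : ℕ}
    (hk : k ≤ m) {a b : ℝ} (ha : 0 < a) (hab : a ≤ b) :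
    ∫⁻ u in Ioc a b, ENNReal.ofReal (tower ψ m (k + 1) u) =
      ENNReal.ofReal (tower ψ m k a - tower ψ m k b) := by
  have hsub : uIcc a b ⊆ Ioi 0 := by
    rw [uIcc_of_le hab]; exact fun x hx => ha.trans_le hx.1
  have hint : IntervalIntegrable (tower ψ m (k + 1)) volume a b :=
    ((H.tower_nonneg_antitoneOn (by omega)).2.mono hsub).intervalIntegrable
  have h1 := integral_eq_of_hasDerivAt_off_countable (tower ψ m k)
    (fun z => -tower ψ m (k + 1) z) (a := a) (b := b) (H.countable_discont hk)
    ((H.tower_continuousOn hk).mono hsub) (fun x hx => by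
      have hx0 : 0 < x := by
        have := hx.1.1; rw [min_eq_left hab] at this; exact ha.trans this
      refine H.tower_hasDerivAt hk hx0 ?_
      by_contra hc
      exact hx.2 ⟨hx0, hc⟩) hint.neg
  rw [intervalIntegral.integral_neg, intervalIntegral.integral_of_le hab] at h1
  rw [← ofReal_integral_eq_lintegral_ofReal ((intervalIntegrable_iff_integrableOn_Ioc_of_le hab).1
    hint) (Eventually.of_forall fun u => H.tower_nonneg hk u)]
  congr 1
  linarith

/-- The integral of a level of the tower over a half-line is the level below. The left end point
`0` is allowed for `k = 0` only, because the higher levels may blow up at `0`. -/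
lemma IsdMonotoneGenerator.lintegral_Ioi_tower (H : IsdMonotoneGenerator (m + 2) ψ) {k : ℕ}
    (hk : k ≤ m) {w : ℝ} (hw : 0 ≤ w) (hw' : 0 < w ∨ k = 0) :
    ∫⁻ u in Ioi w, ENNReal.ofReal (tower ψ m (k + 1) u) = ENNReal.ofReal (tower ψ m k w) := by
  have hcont : ContinuousWithinAt (tower ψ m k) (Ioi w) w := by
    rcases hw' with hw' | rfl
    · exact ((H.tower_continuousOn hk).continuousAt (Ioi_mem_nhds hw')).continuousWithinAt
    · rw [tower_zero]
      exact (H.toIsGenerator.continuousOn w hw).mono fun x hx => hw.trans (le_of_lt hx)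
  have ha : Tendsto (fun n : ℕ => w + 1 / ((n : ℝ) + 1)) atTop (𝓝 w) := by
    simpa using (tendsto_const_nhds (x := w)).add
      (tendsto_one_div_add_atTop_nhds_zero_nat (𝕜 := ℝ))
  have hb : Tendsto (fun n : ℕ => w + 1 + (n : ℝ)) atTop atTop :=
    tendsto_atTop_add_const_left _ _ tendsto_natCast_atTop_atTop
  have ha' : Tendsto (fun n : ℕ => w + 1 / ((n : ℝ) + 1)) atTop (𝓝[>] w) :=
    tendsto_nhdsWithin_iff.2 ⟨ha, Eventually.of_forall fun n => by
      have : (0:ℝ) < 1 / ((n : ℝ) + 1) := by positivity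
      exact lt_add_of_pos_right w this⟩
  have hcov := (aecover_Ioi_of_Ioi (μ := volume) ha).inter (aecover_Iic hb)
  refine hcov.lintegral_eq_of_tendsto _
    (H.tower_measurable hk).ennreal_ofReal.aemeasurable ?_
  have hlim : Tendsto (fun n : ℕ => ENNReal.ofReal (tower ψ m k (w + 1 / ((n : ℝ) + 1)) -
      tower ψ m k (w + 1 + (n : ℝ)))) atTop (𝓝 (ENNReal.ofReal (tower ψ m k w - 0))) :=
    ENNReal.tendsto_ofReal ((hcont.tendsto.comp ha').sub ((H.tower_tendsto hk).comp hb))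
  rw [sub_zero] at hlim
  refine hlim.congr fun n => ?_
  have hp : (0:ℝ) < 1 / ((n : ℝ) + 1) := by positivity
  have hle : (1:ℝ) / ((n : ℝ) + 1) ≤ 1 := by
    rw [div_le_one (by positivity)]; linarith [Nat.cast_nonneg (α := ℝ) n]
  have hsub : Ioc (w + 1 / ((n : ℝ) + 1)) (w + 1 + n) ⊆ Ioi w := fun x hx =>
    lt_trans (by linarith) hx.1
  rw [← H.lintegral_Ioc_tower hk (by positivity) (by linarith [Nat.cast_nonneg (α := ℝ) n])]
  rw [Measure.restrict_restrict (measurableSet_Ioi.inter measurableSet_Iic), Ioi_inter_Iic,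
    inter_eq_left.2 hsub]

end Tower

/-! ### The marginal density is a density of the margin -/

section Density

variable {ψ : ℝ → ℝ} {m : ℕ}

/-- The pseudo-inverse `φ` on `(0,1)`, extended by `0` so as to be measurable on `ℝ`. -/
def qz (ψ : ℝ → ℝ) (y : ℝ) : ℝ := if y ∈ Ioo (0 : ℝ) 1 then qinv ψ y else 0

/-- The Jacobian factor `-φ'(y) = -1 / ψ'(φ(y))` on `(0,1)`, extended by `0`. -/
def jac (ψ : ℝ → ℝ) (m : ℕ) (y : ℝ) : ℝ :=
  if y ∈ Ioo (0 : ℝ) 1 then (tower ψ m 1 (qinv ψ y))⁻¹ else 0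

lemma IsdMonotoneGenerator.tower_one_pos (H : IsdMonotoneGenerator (m + 2) ψ) {z : ℝ}
    (hz : 0 < z) (hp : 0 < ψ z) : 0 < tower ψ m 1 z := by
  by_contra! hn
  have h1 := (H.slope_le (Nat.zero_le m) hz (lt_add_one z)).1
  have h2 := H.toIsGenerator.strict hz.le (lt_add_one z) hp
  rw [tower_zero] at h1
  norm_num at h1
  linarith

lemma IsdMonotoneGenerator.tower_one_qinv_pos (H : IsdMonotoneGenerator (m + 2) ψ) {y : ℝ}
    (hy : y ∈ Ioo (0 : ℝ) 1) : 0 < tower ψ m 1 (qinv ψ y) :=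
  H.tower_one_pos (H.toIsGenerator.qinv_pos hy)
    (by rw [H.toIsGenerator.apply_qinv ⟨hy.1, hy.2.le⟩]; exact hy.1)

lemma IsdMonotoneGenerator.hasDerivAt_qinv (H : IsdMonotoneGenerator (m + 2) ψ) (hm : 1 ≤ m)
    {y : ℝ} (hy : y ∈ Ioo (0 : ℝ) 1) : HasDerivAt (qinv ψ) (-jac ψ m y) y := by
  have hg := H.toIsGenerator
  have hq := hg.qinv_pos hy
  have h1 : HasDerivAt ψ (-tower ψ m 1 (qinv ψ y)) (qinv ψ y) := by
    have := H.hasDerivAt (k := 0) hm hq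
    rw [H.tower_eq hm hq]
    have e : sgnDeriv ψ 0 = ψ := by ext; simp [sgnDeriv]
    rw [e] at this
    exact this
  have h2 := h1.of_local_left_inverse (hg.continuousAt_qinv hy)
    (neg_ne_zero.2 (H.tower_one_qinv_pos hy).ne')
    (by
      filter_upwards [Ioo_mem_nhds hy.1 hy.2] with z hz
      exact hg.apply_qinv ⟨hz.1, hz.2.le⟩)
  rw [jac, if_pos hy, ← inv_neg]
  exact h2

lemma IsdMonotoneGenerator.jac_nonneg (H : IsdMonotoneGenerator (m + 2) ψ) (y : ℝ) :
    0 ≤ jac ψ m y := by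
  rw [jac]
  split_ifs with h
  · exact inv_nonneg.2 (H.tower_one_qinv_pos h).le
  · exact le_rfl

lemma IsdMonotoneGenerator.measurable_jac (H : IsdMonotoneGenerator (m + 2) ψ) :
    Measurable (jac ψ m) := by
  refine measurable_of_antitoneOn (I := Ioo 0 1) ordConnected_Ioo ?_ H.jac_nonneg
    fun z hz => by rw [jac, if_neg hz]
  intro a ha b hb hab
  rw [jac, jac, if_pos ha, if_pos hb]
  have hg := H.toIsGenerator
  exact inv_anti₀ (H.tower_one_qinv_pos ha) ((H.tower_nonneg_antitoneOn (by omega)).2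
    (hg.qinv_pos hb) (hg.qinv_pos ha) (hg.qinv_antitoneOn ⟨ha.1, ha.2.le⟩ ⟨hb.1, hb.2.le⟩ hab))

lemma qz_nonneg (ψ : ℝ → ℝ) (y : ℝ) : 0 ≤ qz ψ y := by
  rw [qz]; split_ifs
  · exact qinv_nonneg _ _
  · exact le_rfl

lemma IsGenerator.measurable_qz (hg : IsGenerator ψ) : Measurable (qz ψ) := by
  refine measurable_of_antitoneOn (I := Ioo 0 1) ordConnected_Ioo ?_ (qz_nonneg ψ)
    fun z hz => by rw [qz, if_neg hz]
  intro a ha b hb hab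
  rw [qz, qz, if_pos ha, if_pos hb]
  exact hg.qinv_antitoneOn ⟨ha.1, ha.2.le⟩ ⟨hb.1, hb.2.le⟩ hab

/-- The density in closed form: the `m + 1` signs of the factors `φ'` cancel the sign of
`D⁻ψ⁽ᵐ⁾`, and the conventions at the boundary make the case distinction disappear. -/
lemma IsdMonotoneGenerator.margDensity_eq (H : IsdMonotoneGenerator (m + 2) ψ) (hm : 1 ≤ m)
    (x : Fin (m + 1) → ℝ) :
    margDensity (m + 2) ψ x =
      (∏ i, jac ψ m (x i)) * tower ψ m (m + 1) (∑ i, qz ψ (x i)) := by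
  have hg := H.toIsGenerator
  change (if (∀ i : Fin (m + 1), x i ∈ Ioo (0 : ℝ) 1) ∧
      (∑ i : Fin (m + 1), pseudoInv ψ (x i)) < pseudoInv ψ 0 then
    (∏ i : Fin (m + 1), deriv (qinv ψ) (x i)) *
      leftDeriv (deriv^[m] ψ) (∑ i : Fin (m + 1), pseudoInv ψ (x i)).toReal
    else 0) = _
  by_cases hx : ∀ i, x i ∈ Ioo (0 : ℝ) 1
  · have hx' : ∀ i, x i ∈ Ioc (0 : ℝ) 1 := fun i => ⟨(hx i).1, (hx i).2.le⟩
    have hs : ∑ i, qz ψ (x i) = ∑ i, qinv ψ (x i) :=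
      Finset.sum_congr rfl fun i _ => if_pos (hx i)
    have hpos : 0 < ∑ i, qinv ψ (x i) :=
      Finset.sum_pos (fun i _ => hg.qinv_pos (hx i)) Finset.univ_nonempty
    have hiff : (∑ i, pseudoInv ψ (x i)) < pseudoInv ψ 0 ↔ 0 < ψ (∑ i, qinv ψ (x i)) := by
      rw [hg.sum_pseudoInv hx', hg.lt_pseudoInv_zero_iff hpos.le]
    by_cases hp : 0 < ψ (∑ i, qinv ψ (x i))
    · rw [if_pos ⟨hx, hiff.2 hp⟩, hg.sum_pseudoInv hx', ENNReal.toReal_ofReal hpos.le, hs]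
      have h1 : ∏ i, deriv (qinv ψ) (x i) = (-1) ^ (m + 1) * ∏ i, jac ψ m (x i) := by
        rw [Finset.prod_congr rfl fun i _ => (H.hasDerivAt_qinv hm (hx i)).deriv,
          Finset.prod_neg]
        simp
      have h2 : tower ψ m (m + 1) (∑ i, qinv ψ (x i)) =
          (-1) ^ (m + 1) * leftDeriv (deriv^[m] ψ) (∑ i, qinv ψ (x i)) := by
        simp [tower, hpos, hp]
      rw [h1, h2]; ring
    · rw [if_neg fun h => hp (hiff.1 h.2), hs, tower_eq_zero (le_antisymm (not_lt.1 hp) (hg.nonneg hpos.le)),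
        mul_zero]
  · rw [if_neg fun h => hx h.1]
    push Not at hx
    obtain ⟨i, hi⟩ := hx
    rw [Finset.prod_eq_zero (Finset.mem_univ i) (by rw [jac, if_neg hi]), zero_mul]

/-- Integrating out one coordinate: the substitution `u = φ(y)` turns the integral into that of
a level of the tower over a half-line, which lowers the level by one. -/
lemma IsdMonotoneGenerator.lintegral_jac_mul_tower (H : IsdMonotoneGenerator (m + 2) ψ)
    (hm : 1 ≤ m) {k : ℕ} (hk : k ≤ m) {x w : ℝ} (hx : x ∈ Ioc (0 : ℝ) 1) (hw : 0 ≤ w)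
    (hw' : 0 < w ∨ k = 0) :
    ∫⁻ y in Ioo 0 x, ENNReal.ofReal (jac ψ m y) *
        ENNReal.ofReal (tower ψ m (k + 1) (w + qz ψ y)) =
      ENNReal.ofReal (tower ψ m k (w + qinv ψ x)) := by
  have hg := H.toIsGenerator
  have hsub : ∀ y ∈ Ioo 0 x, y ∈ Ioo (0 : ℝ) 1 := fun y hy => ⟨hy.1, hy.2.trans_le hx.2⟩
  have hsub' : ∀ y ∈ Ioo 0 x, y ∈ Ioc (0 : ℝ) 1 := fun y hy => ⟨hy.1, (hsub y hy).2.le⟩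
  have himg : qinv ψ '' Ioo 0 x = {u | qinv ψ x < u ∧ 0 < ψ u} := by
    ext u
    constructor
    · rintro ⟨y, hy, rfl⟩
      exact ⟨hg.qinv_strictAntiOn (hsub' y hy) hx hy.2, by
        rw [hg.apply_qinv (hsub' y hy)]; exact hy.1⟩
    · rintro ⟨h1, h2⟩
      have hu : 0 ≤ u := (qinv_nonneg _ _).trans h1.le
      refine ⟨ψ u, ⟨h2, ?_⟩, hg.qinv_apply hu h2⟩
      have := hg.strict (qinv_nonneg ψ x) h1 (by rw [hg.apply_qinv hx]; exact hx.1)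
      rwa [hg.apply_qinv hx] at this
  have hmeas : MeasurableSet {u | qinv ψ x < u ∧ 0 < ψ u} := by
    refine Set.OrdConnected.measurableSet ⟨fun a ha b hb c hc => ⟨ha.1.trans_le hc.1, ?_⟩⟩
    exact hb.2.trans_le (hg.anti ((qinv_nonneg _ _).trans (ha.1.le.trans hc.1)) hc.2)
  have h1 := lintegral_image_eq_lintegral_abs_deriv_mul (s := Ioo 0 x) (f := qinv ψ)
    (f' := fun y => -jac ψ m y) measurableSet_Ioo
    (fun y hy => (H.hasDerivAt_qinv hm (hsub y hy)).hasDerivWithinAt)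
    (fun a ha b hb hab => hg.qinv_strictAntiOn.injOn (hsub' a ha) (hsub' b hb) hab)
    (fun u => ENNReal.ofReal (tower ψ m (k + 1) (w + u)))
  have h2 : ∫⁻ y in Ioo 0 x, ENNReal.ofReal (jac ψ m y) *
        ENNReal.ofReal (tower ψ m (k + 1) (w + qz ψ y)) =
      ∫⁻ y in Ioo 0 x, ENNReal.ofReal |(-jac ψ m y)| *
        ENNReal.ofReal (tower ψ m (k + 1) (w + qinv ψ y)) := by
    refine setLIntegral_congr_fun measurableSet_Ioo fun y hy => ?_
    simp only [abs_neg, abs_of_nonneg (H.jac_nonneg y), qz, if_pos (hsub y hy)]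
  have hq0 := qinv_nonneg ψ x
  have h3 := lintegral_add_left_eq_self (μ := (volume : Measure ℝ))
    ((Ioi (w + qinv ψ x)).indicator fun u => ENNReal.ofReal (tower ψ m (k + 1) u)) w
  rw [h2, ← h1, himg, ← H.lintegral_Ioi_tower hk (by positivity) (hw'.imp_left fun h => by
    positivity), ← lintegral_indicator hmeas, ← lintegral_indicator measurableSet_Ioi,
    ← h3]
  refine lintegral_congr fun u => ?_
  by_cases hu : qinv ψ x < u
  · rw [indicator_of_mem (s := Ioi (w + qinv ψ x)) (by simpa using hu)]
    by_cases hp : 0 < ψ u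
    · rw [indicator_of_mem (by exact ⟨hu, hp⟩)]
    · rw [indicator_of_notMem fun h => hp h.2]
      have hu0 : 0 ≤ u := hq0.trans hu.le
      have : ψ (w + u) = 0 := le_antisymm ((hg.anti hu0 (by linarith)).trans (not_lt.1 hp))
        (hg.nonneg (by positivity))
      rw [tower_eq_zero this, ENNReal.ofReal_zero]
  · rw [indicator_of_notMem fun h => hu h.1, indicator_of_notMem (by simpa using hu)]

/-- The Jacobian factor cut off to the interval `(0,x)`, so that integrals over a box become
integrals over the whole space. -/
def weight (ψ : ℝ → ℝ) (m : ℕ) (x : ℝ) : ℝ → ℝ≥0∞ :=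
  (Ioo 0 x).indicator fun t => ENNReal.ofReal (jac ψ m t)

lemma IsdMonotoneGenerator.measurable_weight (H : IsdMonotoneGenerator (m + 2) ψ) (x : ℝ) :
    Measurable (weight ψ m x) :=
  H.measurable_jac.ennreal_ofReal.indicator measurableSet_Ioo

/-- Integrating out `k` coordinates over a box lowers the level of the tower by `k`. The offset
`w` stands for the sum of `φ` over the coordinates not integrated, hence is positive
unless there are none. -/
lemma IsdMonotoneGenerator.lintegral_box (H : IsdMonotoneGenerator (m + 2) ψ) (hm : 1 ≤ m) :
    ∀ k, k ≤ m + 1 → ∀ (x : Fin k → ℝ), (∀ i, x i ∈ Ioc (0 : ℝ) 1) → ∀ w : ℝ, 0 ≤ w →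
      (0 < w ∨ k = m + 1) →
      ∫⁻ y : Fin k → ℝ, (∏ i, weight ψ m (x i) (y i)) *
          ENNReal.ofReal (tower ψ m (m + 1) (w + ∑ i, qz ψ (y i))) =
        ENNReal.ofReal (tower ψ m (m + 1 - k) (w + ∑ i, qinv ψ (x i))) := by
  intro k
  induction k with
  | zero =>
    intro _ x _ w _ _
    rw [volume_pi, Measure.pi_of_empty, lintegral_dirac]
    simp
  | succ k ih =>
    intro hk x hx w hw hw'
    have hg := H.toIsGenerator
    have hmt : Measurable (tower ψ m (m + 1)) := H.tower_measurable le_rfl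
    have hmw := H.measurable_weight
    have hmq := hg.measurable_qz
    have hmF : Measurable fun y : Fin (k + 1) → ℝ => (∏ i, weight ψ m (x i) (y i)) *
        ENNReal.ofReal (tower ψ m (m + 1) (w + ∑ i, qz ψ (y i))) := by
      refine Measurable.mul (Finset.measurable_fun_prod _ fun i _ =>
        (hmw (x i)).comp (measurable_pi_apply i)) (hmt.comp (measurable_const.add
        (Finset.measurable_fun_sum _ fun i _ => hmq.comp (measurable_pi_apply i)))).ennreal_ofReal
    have e := (volume_preserving_piFinSuccAbove (fun _ : Fin (k + 1) => ℝ) 0).symm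
    rw [← e.lintegral_comp_emb (MeasurableEquiv.measurableEmbedding _), Measure.volume_eq_prod,
      lintegral_prod]
    swap
    · exact (hmF.comp (MeasurableEquiv.measurable _)).aemeasurable
    have hs0 : 0 ≤ ∑ i : Fin k, qinv ψ (x i.succ) :=
      Finset.sum_nonneg fun i _ => qinv_nonneg _ _
    have hinner : ∀ a : ℝ, ∫⁻ b : Fin k → ℝ,
        (∏ i, weight ψ m (x i)
          ((MeasurableEquiv.piFinSuccAbove (fun _ : Fin (k + 1) => ℝ) 0).symm (a, b) i)) *
        ENNReal.ofReal (tower ψ m (m + 1) (w + ∑ i, qz ψ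
          ((MeasurableEquiv.piFinSuccAbove (fun _ : Fin (k + 1) => ℝ) 0).symm (a, b) i))) =
        (Ioo 0 (x 0)).indicator (fun t => ENNReal.ofReal (jac ψ m t) *
          ENNReal.ofReal (tower ψ m (m - k + 1)
            ((w + ∑ i : Fin k, qinv ψ (x i.succ)) + qz ψ t))) a := by
      intro a
      have hcons : ∀ b : Fin k → ℝ,
          (MeasurableEquiv.piFinSuccAbove (fun _ : Fin (k + 1) => ℝ) 0).symm (a, b) =
            Fin.cons a b := fun b => by
        ext i
        simp [MeasurableEquiv.piFinSuccAbove, Fin.insertNthEquiv]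
      simp only [hcons, Fin.prod_univ_succ, Fin.sum_univ_succ, Fin.cons_zero, Fin.cons_succ]
      by_cases ha : a ∈ Ioo 0 (x 0)
      · have ha1 : a ∈ Ioo (0 : ℝ) 1 := ⟨ha.1, ha.2.trans_le (hx 0).2⟩
        have hqa : 0 < qz ψ a := by rw [qz, if_pos ha1]; exact hg.qinv_pos ha1
        have := ih (by omega) (fun i => x i.succ) (fun i => hx _) (w + qz ψ a) (by positivity)
          (Or.inl (by positivity))
        rw [indicator_of_mem ha, show m - k + 1 = m + 1 - k by omega,
          show w + ∑ i : Fin k, qinv ψ (x i.succ) + qz ψ a =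
            w + qz ψ a + ∑ i : Fin k, qinv ψ (x i.succ) by ring, ← this,
          ← lintegral_const_mul']
        · refine lintegral_congr fun b => ?_
          rw [weight, indicator_of_mem ha, mul_assoc, add_assoc]
        · exact ENNReal.ofReal_ne_top
      · rw [indicator_of_notMem ha]
        have : weight ψ m (x 0) a = 0 := indicator_of_notMem ha _
        simp [this]
    rw [lintegral_congr hinner, lintegral_indicator measurableSet_Ioo]
    have hmain := fun hcond => H.lintegral_jac_mul_tower hm (k := m - k) (Nat.sub_le m k) (hx 0)
      (w := w + ∑ i : Fin k, qinv ψ (x i.succ)) (by positivity) hcond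
    rw [hmain (hw'.imp (fun h => by positivity) fun h => by omega), Fin.sum_univ_succ,
      show m + 1 - (k + 1) = m - k by omega]
    congr 2
    ring

lemma IsdMonotoneGenerator.measurable_margDensity (H : IsdMonotoneGenerator (m + 2) ψ)
    (hm : 1 ≤ m) : Measurable fun x : Fin (m + 1) → ℝ => margDensity (m + 2) ψ x := by
  simp only [H.margDensity_eq hm]
  exact (Finset.measurable_fun_prod _ fun i _ =>
    H.measurable_jac.comp (measurable_pi_apply i)).mul ((H.tower_measurable le_rfl).comp
    (Finset.measurable_fun_sum _ fun i _ =>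
      H.toIsGenerator.measurable_qz.comp (measurable_pi_apply i)))

/-- `margDensity` is a density of the `(m+1)`-dimensional margin of the copula. -/
lemma IsdMonotoneGenerator.lintegral_margDensity (H : IsdMonotoneGenerator (m + 2) ψ)
    (hm : 1 ≤ m) {x : Fin (m + 1) → ℝ} (hx : ∀ i, x i ∈ Ioc (0 : ℝ) 1) :
    ∫⁻ y in univ.pi fun i => Ioo 0 (x i), ENNReal.ofReal (margDensity (m + 2) ψ y) =
      ENNReal.ofReal (ψ (∑ i, qinv ψ (x i))) := by
  have h := H.lintegral_box hm (m + 1) le_rfl x hx 0 le_rfl (Or.inr rfl)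
  simp only [zero_add, Nat.sub_self, tower_zero] at h
  rw [← h, ← lintegral_indicator (MeasurableSet.univ_pi fun i => measurableSet_Ioo)]
  refine lintegral_congr fun y => ?_
  by_cases hy : y ∈ univ.pi fun i => Ioo 0 (x i)
  · rw [indicator_of_mem hy, H.margDensity_eq hm,
      ENNReal.ofReal_mul (Finset.prod_nonneg fun i _ => H.jac_nonneg _),
      ENNReal.ofReal_prod_of_nonneg fun i _ => H.jac_nonneg _]
    congr 1
    exact Finset.prod_congr rfl fun i _ => by
      rw [weight, indicator_of_mem (hy i (mem_univ i))]
  · rw [indicator_of_notMem hy]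
    simp only [Set.mem_pi, mem_univ, true_imp_iff, not_forall] at hy
    obtain ⟨i, hi⟩ := hy
    rw [Finset.prod_eq_zero (Finset.mem_univ i) (indicator_of_notMem hi _), zero_mul]

end Density

section Scheffe

/-- A form of Scheffé's lemma: almost everywhere convergence of probability densities to a
probability density implies convergence of the probability of every measurable set. Fatou's lemma
on `s` gives the lower bound and Fatou's lemma on `sᶜ` the upper one. -/
lemma tendsto_setLIntegral_of_ae {α : Type*} [MeasurableSpace α] {μ : Measure α}
    {h : α → ℝ≥0∞} {hn : ℕ → α → ℝ≥0∞} (hm : ∀ n, Measurable (hn n))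
    (hlim : ∀ᵐ x ∂μ, Tendsto (fun n => hn n x) atTop (𝓝 (h x)))
    (h1 : ∫⁻ x, h x ∂μ = 1) (hn1 : ∀ n, ∫⁻ x, hn n x ∂μ = 1) {s : Set α}
    (hs : MeasurableSet s) :
    Tendsto (fun n => ∫⁻ x in s, hn n x ∂μ) atTop (𝓝 (∫⁻ x in s, h x ∂μ)) := by
  have fatou : ∀ t : Set α, ∫⁻ x in t, h x ∂μ ≤ liminf (fun n => ∫⁻ x in t, hn n x ∂μ) atTop := by
    intro t
    calc ∫⁻ x in t, h x ∂μ = ∫⁻ x in t, liminf (fun n => hn n x) atTop ∂μ := by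
          refine lintegral_congr_ae ?_
          filter_upwards [ae_restrict_of_ae hlim] with x hx
          exact hx.liminf_eq.symm
      _ ≤ _ := lintegral_liminf_le hm
  have hsub : ∀ f : α → ℝ≥0∞, ∫⁻ x, f x ∂μ = 1 →
      ∫⁻ x in s, f x ∂μ = 1 - ∫⁻ x in sᶜ, f x ∂μ := by
    intro f hf
    have h2 := lintegral_add_compl f hs (μ := μ)
    rw [hf] at h2
    refine ENNReal.eq_sub_of_add_eq ?_ h2
    exact ne_top_of_le_ne_top ENNReal.one_ne_top (h2 ▸ le_add_self)
  refine tendsto_of_le_liminf_of_limsup_le (fatou s) ?_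
  simp only [hsub _ (hn1 _), hsub h h1]
  rw [ENNReal.limsup_const_sub _ _ ENNReal.one_ne_top]
  exact tsub_le_tsub_left (fatou sᶜ) 1

end Scheffe

/-! ### Convergence of the densities and of the margins -/

section Convergence

variable {ψ : ℝ → ℝ} {Ψ : ℕ → ℝ → ℝ} {m : ℕ}

/-- Convergence climbs one level of the tower at continuity points of the limit: the level
`k + 1` is squeezed between slopes of the level `k`, which converge. -/
lemma tower_tendsto_succ (H : IsdMonotoneGenerator (m + 2) ψ)
    (HN : ∀ n, IsdMonotoneGenerator (m + 2) (Ψ n)) {k : ℕ} (hk : k ≤ m)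
    (hF : ∀ z, 0 < z → Tendsto (fun n => tower (Ψ n) m k z) atTop (𝓝 (tower ψ m k z)))
    {z : ℝ} (hz : 0 < z) (hc : ContinuousAt (tower ψ m (k + 1)) z) {v : ℕ → ℝ}
    (hv : Tendsto v atTop (𝓝 z)) :
    Tendsto (fun n => tower (Ψ n) m (k + 1) (v n)) atTop (𝓝 (tower ψ m (k + 1) z)) := by
  have hslope : ∀ a b, 0 < a → a < b → Tendsto
      (fun n => (tower (Ψ n) m k a - tower (Ψ n) m k b) / (b - a)) atTop
      (𝓝 ((tower ψ m k a - tower ψ m k b) / (b - a))) := fun a b ha hab =>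
    ((hF a ha).sub (hF b (ha.trans hab))).div_const _
  have hanti : ∀ n, AntitoneOn (tower (Ψ n) m (k + 1)) (Ioi 0) := fun n =>
    ((HN n).tower_nonneg_antitoneOn (by omega)).2
  rw [tendsto_order]
  constructor
  · intro c hcz
    obtain ⟨b, hzb, hb⟩ : ∃ b, z < b ∧ c < tower ψ m (k + 1) b := by
      have h1 : ∀ᶠ b in 𝓝[>] z, c < tower ψ m (k + 1) b :=
        (hc.eventually (lt_mem_nhds hcz)).filter_mono nhdsWithin_le_nhds
      exact (h1.and self_mem_nhdsWithin).exists.imp fun b h => ⟨h.2, h.1⟩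
    obtain ⟨a, hza, hab⟩ := exists_between hzb
    have ha : 0 < a := hz.trans hza
    have h2 : c < (tower ψ m k a - tower ψ m k b) / (b - a) :=
      hb.trans_le ((le_div_iff₀ (sub_pos.2 hab)).2 (H.slope_le hk ha hab).2)
    filter_upwards [(hslope a b ha hab).eventually (lt_mem_nhds h2),
      hv.eventually (gt_mem_nhds hza), hv.eventually (lt_mem_nhds hz)] with n h3 h4 h5
    exact h3.trans_le (((div_le_iff₀ (sub_pos.2 hab)).2 ((HN n).slope_le hk ha hab).1).trans
      (hanti n h5 ha h4.le))
  · intro c hcz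
    obtain ⟨a, ha, haz, hac⟩ : ∃ a, 0 < a ∧ a < z ∧ tower ψ m (k + 1) a < c := by
      have h1 : ∀ᶠ b in 𝓝[<] z, 0 < b ∧ tower ψ m (k + 1) b < c :=
        ((lt_mem_nhds hz).and (hc.eventually (gt_mem_nhds hcz))).filter_mono nhdsWithin_le_nhds
      exact (h1.and self_mem_nhdsWithin).exists.imp fun b h => ⟨h.1.1, h.2, h.1.2⟩
    obtain ⟨b, hab, hbz⟩ := exists_between haz
    have hb : 0 < b := ha.trans hab
    have h2 : (tower ψ m k a - tower ψ m k b) / (b - a) < c :=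
      ((div_le_iff₀ (sub_pos.2 hab)).2 (H.slope_le hk ha hab).1).trans_lt hac
    filter_upwards [(hslope a b ha hab).eventually (gt_mem_nhds h2),
      hv.eventually (lt_mem_nhds hbz)] with n h3 h4
    exact ((hanti n hb (hb.trans h4) h4.le).trans
      ((le_div_iff₀ (sub_pos.2 hab)).2 ((HN n).slope_le hk ha hab).2)).trans_lt h3

lemma tower_tendsto_pointwise (H : IsdMonotoneGenerator (m + 2) ψ)
    (HN : ∀ n, IsdMonotoneGenerator (m + 2) (Ψ n))
    (hconv : ∀ z, 0 ≤ z → Tendsto (fun n => Ψ n z) atTop (𝓝 (ψ z))) :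
    ∀ k ≤ m, ∀ z, 0 < z → Tendsto (fun n => tower (Ψ n) m k z) atTop (𝓝 (tower ψ m k z)) := by
  intro k
  induction k with
  | zero =>
    intro _ z hz
    simpa only [tower_zero] using hconv z hz.le
  | succ k ih =>
    intro hk z hz
    exact tower_tendsto_succ H HN (by omega) (ih (by omega)) hz
      ((H.tower_continuousOn hk).continuousAt (Ioi_mem_nhds hz)) tendsto_const_nhds

/-- The level set `∑ φ(xᵢ) = t` is Lebesgue null: `φ` being strictly decreasing, the level set
lies in the frontier of the upper set it generates, and upper sets have null frontier. -/
lemma IsGenerator.volume_level_eq_zero (hg : IsGenerator ψ) (t : ℝ) :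
    volume {x : Fin (m + 1) → ℝ | (∀ i, x i ∈ Ioo (0 : ℝ) 1) ∧ ∑ i, qinv ψ (x i) = t} = 0 := by
  set L := {x : Fin (m + 1) → ℝ | (∀ i, x i ∈ Ioo (0 : ℝ) 1) ∧ ∑ i, qinv ψ (x i) = t} with hL
  set U : Set (Fin (m + 1) → ℝ) := {x | ∃ y ∈ L, y ≤ x} with hU
  have hup : IsUpperSet U := fun a b hab ⟨y, hy, hya⟩ => ⟨y, hy, hya.trans hab⟩
  refine measure_mono_null (fun x hx => ?_) hup.null_frontier
  rw [frontier_eq_closure_inter_closure]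
  refine ⟨subset_closure ⟨x, hx, le_rfl⟩, ?_⟩
  have hlim : Tendsto (fun ε : ℝ => fun i => x i - ε) (𝓝[>] 0) (𝓝 x) := by
    rw [tendsto_pi_nhds]
    intro i
    have : Tendsto (fun ε : ℝ => x i - ε) (𝓝 0) (𝓝 (x i - 0)) :=
      (continuous_const.sub continuous_id).tendsto 0
    rw [sub_zero] at this
    exact this.mono_left nhdsWithin_le_nhds
  refine mem_closure_of_tendsto hlim ?_
  filter_upwards [self_mem_nhdsWithin] with ε hε
  rintro ⟨y, hy, hyx⟩
  have hε : 0 < ε := hε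
  have hlt : ∀ i, y i < x i := fun i => (hyx i).trans_lt (by linarith)
  have : ∑ i, qinv ψ (x i) < ∑ i, qinv ψ (y i) :=
    Finset.sum_lt_sum_of_nonempty Finset.univ_nonempty fun i _ =>
      hg.qinv_strictAntiOn ⟨(hy.1 i).1, (hy.1 i).2.le⟩ ⟨(hx.1 i).1, (hx.1 i).2.le⟩ (hlt i)
  rw [hx.2, hy.2] at this
  exact lt_irrefl _ this

/-- Convergence of the generators gives convergence of the densities, except where `∑ φ(xᵢ)` is one
of the countably many discontinuities of `D⁻ψ⁽ᵐ⁾`. -/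
lemma tendsto_margDensity_ae (H : IsdMonotoneGenerator (m + 2) ψ) (hm : 1 ≤ m)
    (HN : ∀ n, IsdMonotoneGenerator (m + 2) (Ψ n))
    (hconv : ∀ z, 0 ≤ z → Tendsto (fun n => Ψ n z) atTop (𝓝 (ψ z))) :
    ∀ᵐ x : Fin (m + 1) → ℝ, Tendsto (fun n => margDensity (m + 2) (Ψ n) x) atTop
      (𝓝 (margDensity (m + 2) ψ x)) := by
  have hg := H.toIsGenerator
  have hG := fun n => (HN n).toIsGenerator
  have hT := tower_tendsto_pointwise H HN hconv
  set D := {z ∈ Ioi (0 : ℝ) | ¬ ContinuousAt (tower ψ m (m + 1)) z} with hD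
  have hnull : volume (⋃ t ∈ D, {x : Fin (m + 1) → ℝ |
      (∀ i, x i ∈ Ioo (0 : ℝ) 1) ∧ ∑ i, qinv ψ (x i) = t}) = 0 :=
    (measure_biUnion_null_iff (H.countable_discont le_rfl)).2 fun t _ => hg.volume_level_eq_zero t
  filter_upwards [compl_mem_ae_iff.2 hnull] with x hxD
  simp only [H.margDensity_eq hm, (HN _).margDensity_eq hm]
  by_cases hx : ∀ i, x i ∈ Ioo (0 : ℝ) 1
  · have hq : ∀ i, Tendsto (fun n => qinv (Ψ n) (x i)) atTop (𝓝 (qinv ψ (x i))) := fun i =>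
      tendsto_qinv hg hG hconv (hx i) tendsto_const_nhds
    have hjac : ∀ i, Tendsto (fun n => jac (Ψ n) m (x i)) atTop (𝓝 (jac ψ m (x i))) := by
      intro i
      simp only [jac, if_pos (hx i)]
      exact (tower_tendsto_succ H HN (Nat.zero_le m) (hT 0 (Nat.zero_le m)) (hg.qinv_pos (hx i))
        ((H.tower_continuousOn hm).continuousAt (Ioi_mem_nhds (hg.qinv_pos (hx i)))) (hq i)).inv₀
        (H.tower_one_qinv_pos (hx i)).ne'
    simp only [qz, if_pos (hx _)]
    have hpos : 0 < ∑ i, qinv ψ (x i) :=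
      Finset.sum_pos (fun i _ => hg.qinv_pos (hx i)) Finset.univ_nonempty
    refine (tendsto_finsetProd _ fun i _ => hjac i).mul
      (tower_tendsto_succ H HN le_rfl (hT m le_rfl) hpos ?_ (tendsto_finsetSum _ fun i _ => hq i))
    by_contra hcon
    exact hxD (mem_biUnion (x := ∑ i, qinv ψ (x i)) ⟨hpos, hcon⟩ ⟨hx, rfl⟩)
  · push Not at hx
    obtain ⟨i, hi⟩ := hx
    have h0 : ∀ f : ℝ → ℝ, ∏ i, jac f m (x i) = 0 := fun f =>
      Finset.prod_eq_zero (Finset.mem_univ i) (by rw [jac, if_neg hi])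
    simp only [h0, zero_mul, tendsto_const_nhds]

/-- Almost everywhere convergence of the densities gives convergence of the
`(m+1)`-dimensional margins of the copulas. -/
lemma tendsto_marginal_of_ae (H : IsdMonotoneGenerator (m + 2) ψ) (hm : 1 ≤ m)
    (HN : ∀ n, IsdMonotoneGenerator (m + 2) (Ψ n))
    (hlim : ∀ᵐ x ∂(volume.restrict (univ.pi fun _ : Fin (m + 1) => Icc (0 : ℝ) 1)),
      Tendsto (fun n => margDensity (m + 2) (Ψ n) x) atTop (𝓝 (margDensity (m + 2) ψ x)))
    {x : Fin (m + 1) → ℝ} (hx : ∀ i, x i ∈ Ioc (0 : ℝ) 1) :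
    Tendsto (fun n => Ψ n (∑ i, qinv (Ψ n) (x i))) atTop (𝓝 (ψ (∑ i, qinv ψ (x i)))) := by
  set Q : Set (Fin (m + 1) → ℝ) := univ.pi fun _ => Ioo (0 : ℝ) 1 with hQ
  have hQsub : Q ⊆ univ.pi fun _ : Fin (m + 1) => Icc (0 : ℝ) 1 :=
    pi_mono fun _ _ => Ioo_subset_Icc_self
  have hlim' := ae_restrict_of_ae_restrict_of_subset hQsub hlim
  have htotal : ∀ f : ℝ → ℝ, IsdMonotoneGenerator (m + 2) f →
      ∫⁻ y, ENNReal.ofReal (margDensity (m + 2) f y) ∂(volume.restrict Q) = 1 := by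
    intro f Hf
    have := Hf.lintegral_margDensity hm (x := fun _ => 1) fun _ => ⟨one_pos, le_rfl⟩
    simpa [Hf.toIsGenerator.qinv_one, Hf.toIsGenerator.map_zero] using this
  have hbox : ∀ f : ℝ → ℝ, IsdMonotoneGenerator (m + 2) f →
      ∫⁻ y in univ.pi fun i => Ioo 0 (x i), ENNReal.ofReal (margDensity (m + 2) f y)
        ∂(volume.restrict Q) = ENNReal.ofReal (f (∑ i, qinv f (x i))) := by
    intro f Hf
    rw [Measure.restrict_restrict (MeasurableSet.univ_pi fun i => measurableSet_Ioo),
      inter_eq_left.2 (pi_mono fun i _ => Ioo_subset_Ioo_right (hx i).2)]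
    exact Hf.lintegral_margDensity hm hx
  have h := tendsto_setLIntegral_of_ae (μ := volume.restrict Q)
    (h := fun y => ENNReal.ofReal (margDensity (m + 2) ψ y))
    (hn := fun n y => ENNReal.ofReal (margDensity (m + 2) (Ψ n) y))
    (fun n => ((HN n).measurable_margDensity hm).ennreal_ofReal)
    (hlim'.mono fun y hy => ENNReal.tendsto_ofReal hy) (htotal ψ H) (fun n => htotal _ (HN n))
    (MeasurableSet.univ_pi fun i => measurableSet_Ioo : MeasurableSet
      (univ.pi fun i => Ioo 0 (x i)))
  simp only [hbox ψ H, hbox _ (HN _)] at h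
  have h' := (ENNReal.tendsto_toReal ENNReal.ofReal_ne_top).comp h
  have hr : ∀ f : ℝ → ℝ, IsdMonotoneGenerator (m + 2) f →
      (ENNReal.ofReal (f (∑ i, qinv f (x i)))).toReal = f (∑ i, qinv f (x i)) := fun f Hf =>
    ENNReal.toReal_ofReal (Hf.toIsGenerator.nonneg
      (Finset.sum_nonneg fun i _ => qinv_nonneg _ _))
  rw [hr ψ H] at h'
  exact h'.congr fun n => hr _ (HN n)

/-- The point `(x, y, 1, …, 1)`, at which an Archimedean copula takes the value of its bivariate
margin at `(x, y)`. -/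
def pairPoint (k : ℕ) (x y : ℝ) : Fin (k + 2) → ℝ := Fin.cons x (Fin.cons y fun _ => 1)

lemma pairPoint_mem {k : ℕ} {x y : ℝ} (hx : x ∈ Ioc (0 : ℝ) 1) (hy : y ∈ Ioc (0 : ℝ) 1)
    (i : Fin (k + 2)) : pairPoint k x y i ∈ Ioc (0 : ℝ) 1 := by
  refine Fin.cases hx (fun j => Fin.cases hy (fun l => ?_) j) i
  simp [pairPoint]

lemma IsGenerator.sum_qinv_pairPoint (hg : IsGenerator ψ) (k : ℕ) (x y : ℝ) :
    ∑ i, qinv ψ (pairPoint k x y i) = qinv ψ x + qinv ψ y := by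
  simp [pairPoint, Fin.sum_univ_succ, hg.qinv_one]

end Convergence

/-- For normalized `d`-monotone generators `ψ, ψ₁, ψ₂, …`, pointwise
convergence of the copulas `C_{ψₙ} → C_ψ` on `[0,1]^d` is equivalent to
`λ_{d-1}`-almost everywhere convergence of the `(d-1)`-marginal densities
`cₙ^{1:d-1} → c^{1:d-1}` on `[0,1]^{d-1}`. -/
theorem archCopula_conv_iff_margDensity_conv
    (d : ℕ) (hd : 3 ≤ d) (ψ : ℝ → ℝ) (Ψ : ℕ → ℝ → ℝ)
    (hψ : IsdMonotoneGenerator d ψ) (hψnorm : ψ 1 = 1 / 2)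
    (hΨ : ∀ n, IsdMonotoneGenerator d (Ψ n)) (hΨnorm : ∀ n, Ψ n 1 = 1 / 2) :
    (∀ x : Fin d → ℝ, (∀ i, x i ∈ Icc (0 : ℝ) 1) →
        Tendsto (fun n => archCopula d (Ψ n) x) atTop (𝓝 (archCopula d ψ x))) ↔
      (∀ᵐ x ∂(volume.restrict (Set.univ.pi fun _ : Fin (d - 1) => Icc (0 : ℝ) 1)),
        Tendsto (fun n => margDensity d (Ψ n) x) atTop (𝓝 (margDensity d ψ x))) := by
  obtain ⟨k, rfl⟩ : ∃ k, d = k + 3 := ⟨d - 3, by omega⟩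
  have hg := hψ.toIsGenerator
  have hG := fun n => (hΨ n).toIsGenerator
  constructor
  · intro hC
    refine ae_restrict_of_ae (tendsto_margDensity_ae (m := k + 1) hψ (by omega) hΨ fun z hz =>
      tendsto_generator hg hG hψnorm hΨnorm (fun x hx y hy => ?_) hz)
    have hp := pairPoint_mem (k := k + 1) hx hy
    have h := hC (pairPoint (k + 1) x y) fun i => ⟨(hp i).1.le, (hp i).2⟩
    simpa only [hg.archCopula_eq hp, (hG _).archCopula_eq hp, hg.sum_qinv_pairPoint,
      (hG _).sum_qinv_pairPoint] using h
  · intro hc x hx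
    refine tendsto_archCopula hg hG (fun z hz =>
      tendsto_generator hg hG hψnorm hΨnorm (fun x hx y hy => ?_) hz) hx
    have h := tendsto_marginal_of_ae (m := k + 1) hψ (by omega) hΨ hc
      (pairPoint_mem (k := k) hx hy)
    simpa only [hg.sum_qinv_pairPoint, (hG _).sum_qinv_pairPoint] using h
end
end

section
/- Let d ≥ 3 and let ψ, ψ_1, ψ_2, … be normalized d-monotone Archimedean generators such that the induced copulas C_n = C_{ψ_n} converge uniformly on [0,1]^d to C = C_ψ. Then there exists a Borel set Λ ⊆ (0,1)^{d−1} with ∫_Λ c^{1:d−1} dλ_{d−1} = 1 such that for every x ∈ Λ there is a set U^x ⊆ [f^0(x),1] which is dense in [f^0(x),1] and satisfies lim_{n→∞} K_{C_n}(x,[0,y]) = K_C(x,[0,y]) for every y ∈ U^x. -/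
/-!
The proof works in the coordinates `xᵢ = ψ(tᵢ)`, in which the copula is `ψ` of a sum and the kernel
is the quotient `D⁻ψ⁽ᵈ⁻²⁾(s + φ(y)) / D⁻ψ⁽ᵈ⁻²⁾(s)` with `s = ∑ tᵢ`. Below the threshold `f⁰(x)` the
numerator vanishes, so this quotient formula holds for every `y ∈ [0,1]` once `s < φ(0)`
(`markovKernel_eq`).

Uniform convergence of the copulas and the normalisation `ψ(1) = 1/2` give `ψₙ → ψ` pointwise
(`tendsto_generator`): convergence propagates from `1` to sums and halves, hence to dyadic numbers,
hence everywhere by monotonicity. The functions `(-1)ᵏψ⁽ᵏ⁾`, `k ≤ d - 2`, are convex and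
non-increasing (`convex_antitone`), and pointwise convergence of convex functions implies convergence
of their one-sided derivatives, also along convergent arguments, at every differentiability point
of the limit (`tendsto_leftDeriv`). Applying this `d - 1` times, and using `φₙ → φ` on `(0,1)`,
gives convergence of the kernels whenever `ψ⁽ᵈ⁻²⁾` is differentiable at `s` and at `s + φ(y)`.

Accordingly `Λ` is the set of `x = ψ(t)` with `s < φ(0)` and `ψ⁽ᵈ⁻²⁾` differentiable at `s`, and
`U^x` is the set of `y ∈ (f⁰(x),1)` with `ψ⁽ᵈ⁻²⁾` differentiable at `s + φ(y)`. A convex function is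
differentiable almost everywhere, so `U^x` is dense. The change of variables `x = ψ(t)` turns
`∫_Λ c^{1:d-1}` into the integral of `(-1)^{d-1}ψ⁽ᵈ⁻¹⁾(∑ tᵢ)` over the positive orthant, which equals
`ψ(0) = 1` by Tonelli and `d - 1` applications of the fundamental theorem of calculus
(`lintegral_pi`, `integral_margDensity`).
-/

open MeasureTheory Set Filter Topology
open scoped ENNReal NNReal Classical

noncomputable section

/-! ### Elementary properties of generators -/

lemma psiExt_coe (ψ : ℝ → ℝ) {r : ℝ} (hr : 0 ≤ r) : psiExt ψ (ENNReal.ofReal r) = ψ r := by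
  simp [psiExt, ENNReal.toReal_ofReal hr]

lemma psiExt_top (ψ : ℝ → ℝ) : psiExt ψ ∞ = 0 := by simp [psiExt]

namespace IsGenerator

variable {ψ : ℝ → ℝ}

lemma psiExt_zero (h : IsGenerator ψ) : psiExt ψ 0 = 1 := by
  simpa [psiExt] using h.map_zero

lemma psiExt_nonneg (h : IsGenerator ψ) (z : ℝ≥0∞) : 0 ≤ psiExt ψ z := by
  unfold psiExt
  split_ifs
  · exact le_rfl
  · exact (h.mem_Icc _ ENNReal.toReal_nonneg).1

lemma psiExt_le_one (h : IsGenerator ψ) (z : ℝ≥0∞) : psiExt ψ z ≤ 1 := by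
  unfold psiExt
  split_ifs
  · exact zero_le_one
  · exact (h.mem_Icc _ ENNReal.toReal_nonneg).2

lemma psiExt_antitone (h : IsGenerator ψ) : Antitone (psiExt ψ) := by
  intro a b hab
  by_cases hb : b = ∞
  · rw [hb, psiExt_top]; exact h.psiExt_nonneg a
  · have ha : a ≠ ∞ := ne_top_of_le_ne_top hb hab
    simp only [psiExt, ha, hb, if_false]
    exact h.antitoneOn ENNReal.toReal_nonneg ENNReal.toReal_nonneg (ENNReal.toReal_mono hb hab)

lemma psiExt_continuous (h : IsGenerator ψ) : Continuous (psiExt ψ) := by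
  rw [continuous_iff_continuousAt]
  intro z
  by_cases hz : z = ∞
  · subst hz
    rw [ContinuousAt, psiExt_top, tendsto_order]
    refine ⟨fun a ha => Eventually.of_forall fun z => ha.trans_le (h.psiExt_nonneg z), ?_⟩
    intro a ha
    obtain ⟨M, hM⟩ := eventually_atTop.1 (h.tendsto_atTop.eventually_lt_const ha)
    have : Ioi (ENNReal.ofReal (max M 0)) ∈ 𝓝 ∞ := Ioi_mem_nhds ENNReal.ofReal_lt_top
    filter_upwards [this] with z hz
    refine (h.psiExt_antitone (le_of_lt hz)).trans_lt ?_
    rw [psiExt_coe ψ (le_max_right _ _)]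
    exact hM _ (le_max_left _ _)
  · have h1 : ContinuousAt (fun z : ℝ≥0∞ => ψ z.toReal) z := by
      have h2 : ContinuousWithinAt ψ (Ici 0) z.toReal :=
        h.continuousOn _ (mem_Ici.2 ENNReal.toReal_nonneg)
      have h3 : Tendsto (fun z : ℝ≥0∞ => z.toReal) (𝓝 z) (𝓝[Ici 0] z.toReal) :=
        tendsto_nhdsWithin_iff.2 ⟨ENNReal.tendsto_toReal hz,
          Eventually.of_forall fun _ => ENNReal.toReal_nonneg⟩
      exact h2.tendsto.comp h3
    refine h1.congr ?_
    filter_upwards [isOpen_ne.mem_nhds hz] with w hw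
    have : w ≠ ∞ := hw
    simp [psiExt, this]

lemma psiExt_pseudoInv (h : IsGenerator ψ) {y : ℝ} (hy : y ∈ Icc (0 : ℝ) 1) :
    psiExt ψ (pseudoInv ψ y) = y := by
  have hne : {z : ℝ≥0∞ | psiExt ψ z = y}.Nonempty :=
    mem_range_of_exists_le_of_exists_ge h.psiExt_continuous
      ⟨∞, by rw [psiExt_top]; exact hy.1⟩ ⟨0, by rw [h.psiExt_zero]; exact hy.2⟩
  have hcl : IsClosed {z : ℝ≥0∞ | psiExt ψ z = y} :=
    isClosed_eq h.psiExt_continuous continuous_const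
  exact hcl.sInf_mem hne

lemma psiExt_eq_zero_iff (h : IsGenerator ψ) {z : ℝ≥0∞} :
    psiExt ψ z = 0 ↔ pseudoInv ψ 0 ≤ z := by
  constructor
  · intro hz
    exact sInf_le hz
  · intro hz
    refine le_antisymm ?_ (h.psiExt_nonneg z)
    have := h.psiExt_antitone hz
    rwa [h.psiExt_pseudoInv ⟨le_rfl, zero_le_one⟩] at this

lemma psiExt_pos_iff (h : IsGenerator ψ) {z : ℝ≥0∞} :
    0 < psiExt ψ z ↔ z < pseudoInv ψ 0 := by
  rw [← not_le (a := pseudoInv ψ 0), ← h.psiExt_eq_zero_iff, lt_iff_le_and_ne]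
  simp [h.psiExt_nonneg z, eq_comm]

lemma psiExt_strict (h : IsGenerator ψ) {a b : ℝ≥0∞} (hab : a < b) (hb : b ≤ pseudoInv ψ 0) :
    psiExt ψ b < psiExt ψ a := by
  by_cases hbt : b = ∞
  · subst hbt
    rw [psiExt_top, h.psiExt_pos_iff]
    exact hab.trans_le hb
  · have hat : a ≠ ∞ := (hab.trans_le le_top).ne
    simp only [psiExt, hat, hbt, if_false]
    refine h.strictAnti ENNReal.toReal_nonneg ((ENNReal.toReal_lt_toReal hat hbt).2 hab) ?_
    rwa [ENNReal.ofReal_toReal hbt]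

lemma pseudoInv_le (h : IsGenerator ψ) {y : ℝ} (hy : y ∈ Icc (0 : ℝ) 1) :
    pseudoInv ψ y ≤ pseudoInv ψ 0 := by
  by_contra! hlt
  have h0 : psiExt ψ (pseudoInv ψ y) = 0 := h.psiExt_eq_zero_iff.2 hlt.le
  rw [h.psiExt_pseudoInv hy] at h0
  rw [h0] at hlt
  exact lt_irrefl _ hlt

/-- `ψ` and its pseudo-inverse form an (order-reversing) Galois connection on `[0,1]`. -/
lemma lt_pseudoInv_iff (h : IsGenerator ψ) {y : ℝ} (hy : y ∈ Icc (0 : ℝ) 1) {z : ℝ≥0∞} :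
    z < pseudoInv ψ y ↔ y < psiExt ψ z := by
  constructor
  · intro hz
    have := h.psiExt_strict hz (h.pseudoInv_le hy)
    rwa [h.psiExt_pseudoInv hy] at this
  · intro hz
    by_contra! hle
    have := h.psiExt_antitone hle
    rw [h.psiExt_pseudoInv hy] at this
    linarith

lemma pseudoInv_le_iff (h : IsGenerator ψ) {y : ℝ} (hy : y ∈ Icc (0 : ℝ) 1) {z : ℝ≥0∞} :
    pseudoInv ψ y ≤ z ↔ psiExt ψ z ≤ y := by
  rw [← not_lt, h.lt_pseudoInv_iff hy, not_lt]

lemma psiExt_lt_of_lt (h : IsGenerator ψ) {y : ℝ} (hy : y ∈ Ioc (0 : ℝ) 1) {z : ℝ≥0∞}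
    (hz : pseudoInv ψ y < z) : psiExt ψ z < y := by
  have hy' : y ∈ Icc (0 : ℝ) 1 := ⟨hy.1.le, hy.2⟩
  by_cases hz0 : pseudoInv ψ 0 ≤ z
  · rw [h.psiExt_eq_zero_iff.2 hz0]; exact hy.1
  · have := h.psiExt_strict hz (not_le.1 hz0).le
    rwa [h.psiExt_pseudoInv hy'] at this

lemma pseudoInv_psiExt (h : IsGenerator ψ) {z : ℝ≥0∞} (hz : z ≤ pseudoInv ψ 0) :
    pseudoInv ψ (psiExt ψ z) = z := by
  have hle : pseudoInv ψ (psiExt ψ z) ≤ z := sInf_le rfl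
  refine hle.antisymm (not_lt.1 fun hlt => ?_)
  have := h.psiExt_strict hlt hz
  rw [h.psiExt_pseudoInv ⟨h.psiExt_nonneg z, h.psiExt_le_one z⟩] at this
  exact lt_irrefl _ this

lemma pseudoInv_ne_top (h : IsGenerator ψ) {y : ℝ} (hy : y ∈ Ioc (0 : ℝ) 1) :
    pseudoInv ψ y ≠ ∞ := by
  intro ht
  have := h.psiExt_pseudoInv (y := y) ⟨hy.1.le, hy.2⟩
  rw [ht, psiExt_top] at this
  exact hy.1.ne this

lemma pseudoInv_ofReal (h : IsGenerator ψ) {r : ℝ} (hr : 0 ≤ r)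
    (hz : ENNReal.ofReal r ≤ pseudoInv ψ 0) : pseudoInv ψ (ψ r) = ENNReal.ofReal r := by
  have := h.pseudoInv_psiExt hz
  rwa [psiExt_coe ψ hr] at this

lemma pseudoInv_one (h : IsGenerator ψ) : pseudoInv ψ 1 = 0 := by
  have := h.pseudoInv_psiExt (z := 0) (zero_le)
  rwa [h.psiExt_zero] at this

lemma pseudoInv_zero_pos (h : IsGenerator ψ) : 0 < pseudoInv ψ 0 := by
  rw [← h.psiExt_pos_iff, h.psiExt_zero]; exact zero_lt_one

lemma pseudoInv_continuousOn (h : IsGenerator ψ) :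
    ContinuousOn (pseudoInv ψ) (Icc 0 1) := by
  intro y hy
  rw [ContinuousWithinAt, tendsto_order]
  constructor
  · intro a ha
    have ha' := (h.lt_pseudoInv_iff hy).1 ha
    filter_upwards [self_mem_nhdsWithin, mem_nhdsWithin_of_mem_nhds (Iio_mem_nhds ha')] with w hw hw2
    exact (h.lt_pseudoInv_iff hw).2 hw2
  · intro b hb
    by_cases hb0 : pseudoInv ψ 0 < b
    · filter_upwards [self_mem_nhdsWithin] with w hw
      exact (h.pseudoInv_le hw).trans_lt hb0
    · obtain ⟨z, hz1, hz2⟩ := exists_between hb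
      have hzy : psiExt ψ z < y := by
        have := h.psiExt_strict hz1 (hz2.le.trans (not_lt.1 hb0))
        rwa [h.psiExt_pseudoInv hy] at this
      filter_upwards [self_mem_nhdsWithin, mem_nhdsWithin_of_mem_nhds (Ioi_mem_nhds hzy)]
        with w hw hw2
      exact ((h.pseudoInv_le_iff hw).2 (le_of_lt hw2)).trans_lt hz2

lemma archCopula_continuousOn (h : IsGenerator ψ) (d : ℕ) :
    ContinuousOn (archCopula d ψ) {x | ∀ i, x i ∈ Icc (0 : ℝ) 1} := by
  refine h.psiExt_continuous.comp_continuousOn ?_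
  refine continuousOn_finsetSum _ fun i _ => ?_
  exact h.pseudoInv_continuousOn.comp (continuous_apply i).continuousOn fun x hx => hx i

/-- The defining functional identity of the copula: in the coordinates `xᵢ = ψ(zᵢ)` it is
`ψ` of the sum. -/
lemma archCopula_psiExt (h : IsGenerator ψ) {d : ℕ} (z : Fin d → ℝ≥0∞) :
    archCopula d ψ (fun i => psiExt ψ (z i)) = psiExt ψ (∑ i, z i) := by
  unfold archCopula
  by_cases hz : ∀ i, z i ≤ pseudoInv ψ 0
  · simp_rw [h.pseudoInv_psiExt (hz _)]
  · push Not at hz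
    obtain ⟨i, hi⟩ := hz
    have h1 : psiExt ψ (z i) = 0 := h.psiExt_eq_zero_iff.2 hi.le
    rw [h.psiExt_eq_zero_iff.2 (hi.le.trans (Finset.single_le_sum (fun _ _ => zero_le) (Finset.mem_univ i))),
      h.psiExt_eq_zero_iff]
    calc pseudoInv ψ 0 = pseudoInv ψ (psiExt ψ (z i)) := by rw [h1]
      _ ≤ _ := Finset.single_le_sum (f := fun i => pseudoInv ψ (psiExt ψ (z i)))
          (fun _ _ => zero_le) (Finset.mem_univ i)

end IsGenerator

/-! ### Derivatives of `d`-monotone generators -/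

/-- The sign-adjusted derivative `(-1)ᵏ ψ⁽ᵏ⁾`. -/
def altDeriv (ψ : ℝ → ℝ) (k : ℕ) (z : ℝ) : ℝ := (-1 : ℝ) ^ k * deriv^[k] ψ z

lemma altDeriv_zero (ψ : ℝ → ℝ) : altDeriv ψ 0 = ψ := by
  funext z; simp [altDeriv]

lemma deriv_altDeriv (ψ : ℝ → ℝ) (k : ℕ) (z : ℝ) :
    deriv (altDeriv ψ k) z = -altDeriv ψ (k + 1) z := by
  unfold altDeriv
  rw [deriv_const_mul_field, Function.iterate_succ_apply', pow_succ]
  ring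

/-- An antitone convex function vanishing at infinity vanishes wherever its derivative does. -/
lemma eq_zero_of_deriv_eq_zero {f : ℝ → ℝ} (hc : ConvexOn ℝ (Ioi 0) f)
    (ha : AntitoneOn f (Ioi 0)) (ht : Tendsto f atTop (𝓝 0)) {s : ℝ} (hs : 0 < s)
    (hd : DifferentiableAt ℝ f s) (h0 : deriv f s = 0) : f s = 0 := by
  have hconst : ∀ z, s < z → f z = f s := by
    intro z hz
    refine le_antisymm (ha hs (hs.trans hz) hz.le) ?_
    have h1 := hc.deriv_le_slope hs (hs.trans hz) hz hd
    rw [h0, slope_def_field] at h1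
    have h2 : 0 ≤ f z - f s := by
      have := mul_nonneg h1 (sub_pos.2 hz).le
      rwa [div_mul_cancel₀ _ (sub_pos.2 hz).ne'] at this
    linarith
  refine tendsto_nhds_unique (tendsto_const_nhds.congr' ?_) ht
  filter_upwards [eventually_gt_atTop s] with z hz
  exact (hconst z hz).symm

namespace IsdMonotoneGenerator

variable {d : ℕ} {ψ : ℝ → ℝ}

lemma differentiableAt_altDeriv (h : IsdMonotoneGenerator d ψ) {k : ℕ} (hk : k < d - 2) {z : ℝ}
    (hz : 0 < z) : DifferentiableAt ℝ (altDeriv ψ k) z :=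
  (h.differentiable k hk z hz).const_mul _

/-- No derivative of order at most `d - 2` can stay bounded away from `0` near infinity with a
fixed sign: the derivative of the next lower order would then grow linearly and so stay away from
`0` as well, and descending to order `0` contradicts `ψ → 0`. -/
lemma not_eventually_ge (h : IsdMonotoneGenerator d ψ) : ∀ k ≤ d - 2, ∀ σ c M : ℝ, 0 < c → 0 < M →
    ¬ ∀ z, M ≤ z → c ≤ σ * altDeriv ψ k z := by
  intro k
  induction k with
  | zero =>
    intro _ σ c M hc hM hall
    rw [altDeriv_zero] at hall
    have h1 : Tendsto (fun z => σ * ψ z) atTop (𝓝 (σ * 0)) :=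
      h.toIsGenerator.tendsto_atTop.const_mul σ
    rw [mul_zero] at h1
    have h2 := ge_of_tendsto h1 ((eventually_ge_atTop M).mono hall)
    linarith
  | succ k ih =>
    intro hk σ c M hc hM hall
    set f : ℝ → ℝ := fun z => -σ * altDeriv ψ k z with hf
    have hfd : ∀ z, 0 < z → DifferentiableAt ℝ f z := fun z hz =>
      (h.differentiableAt_altDeriv hk hz).const_mul _
    have hderiv : ∀ z, M ≤ z → c ≤ deriv f z := by
      intro z hz
      rw [hf, deriv_const_mul_field, deriv_altDeriv]
      have := hall z hz
      linarith
    -- the mean value inequality makes `f` grow at least linearly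
    have hgrow : ∀ z, M ≤ z → c * (z - M) ≤ f z - f M := by
      intro z hz
      refine (convex_Ici M).mul_sub_le_image_sub_of_le_deriv ?_ ?_ ?_ M (mem_Ici.2 le_rfl) z hz hz
      · intro w hw
        exact (hfd w (hM.trans_le hw)).continuousAt.continuousWithinAt
      · intro w hw
        exact (hfd w (hM.trans_le (interior_subset hw))).differentiableWithinAt
      · intro w hw
        exact hderiv w (interior_subset hw)
    refine ih (by omega) (-σ) 1 (max M (M + (1 - f M) / c)) zero_lt_one (hM.trans_le (le_max_left _ _)) ?_
    intro z hz
    have h1 := hgrow z ((le_max_left _ _).trans hz)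
    have h2 : (1 - f M) / c ≤ z - M := by linarith [(le_max_right _ _).trans hz]
    rw [div_le_iff₀ hc] at h2
    change 1 ≤ f z
    linarith

lemma tendsto_altDeriv_of_antitone (h : IsdMonotoneGenerator d ψ) {k : ℕ} (hk : k ≤ d - 2)
    (ha : AntitoneOn (altDeriv ψ k) (Ioi 0)) : Tendsto (altDeriv ψ k) atTop (𝓝 0) := by
  have hnn : ∀ z, 0 < z → 0 ≤ altDeriv ψ k z := by
    intro z hz
    by_contra! hlt
    refine h.not_eventually_ge k hk (-1) (-altDeriv ψ k z) z (by linarith) hz fun w hw => ?_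
    have := ha hz (hz.trans_le hw) hw
    linarith
  rw [tendsto_order]
  constructor
  · intro a ha0
    filter_upwards [eventually_gt_atTop 0] with z hz
    exact ha0.trans_le (hnn z hz)
  · intro c hc
    have := h.not_eventually_ge k hk 1 c 1 hc one_pos
    push Not at this
    obtain ⟨z, hz, hzc⟩ := this
    filter_upwards [eventually_ge_atTop z] with w hw
    have hz0 : 0 < z := one_pos.trans_le hz
    have := ha hz0 (hz0.trans_le hw) hw
    linarith

/-- The sign-adjusted derivatives of orders `k ≤ d - 2` are all convex and non-increasing
(descending induction on `k`). -/
lemma convex_antitone (h : IsdMonotoneGenerator d ψ) {k : ℕ} (hk : k ≤ d - 2) :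
    ConvexOn ℝ (Ioi 0) (altDeriv ψ k) ∧ AntitoneOn (altDeriv ψ k) (Ioi 0) := by
  induction hk using Nat.decreasingInduction with
  | self => exact ⟨h.convexOn, h.antitoneOn⟩
  | of_succ k hk ih =>
    have hnn : ∀ z, 0 < z → 0 ≤ altDeriv ψ (k + 1) z := by
      intro z hz
      have ht := h.tendsto_altDeriv_of_antitone (Nat.succ_le_of_lt hk) ih.2
      refine le_of_tendsto ht ?_
      filter_upwards [eventually_ge_atTop z] with w hw
      exact ih.2 hz (hz.trans_le hw) hw
    have hcont : ContinuousOn (altDeriv ψ k) (Ioi 0) := fun z hz =>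
      (h.differentiableAt_altDeriv hk hz).continuousAt.continuousWithinAt
    have hdiff : DifferentiableOn ℝ (altDeriv ψ k) (interior (Ioi 0)) := fun z hz =>
      (h.differentiableAt_altDeriv hk (interior_subset hz)).differentiableWithinAt
    constructor
    · refine MonotoneOn.convexOn_of_deriv (convex_Ioi 0) hcont hdiff ?_
      intro x hx y hy hxy
      rw [deriv_altDeriv, deriv_altDeriv]
      exact neg_le_neg (ih.2 (interior_subset hx) (interior_subset hy) hxy)
    · refine antitoneOn_of_deriv_nonpos (convex_Ioi 0) hcont hdiff ?_
      intro x hx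
      rw [deriv_altDeriv]
      linarith [hnn x (interior_subset hx)]

lemma tendsto_altDeriv (h : IsdMonotoneGenerator d ψ) {k : ℕ} (hk : k ≤ d - 2) :
    Tendsto (altDeriv ψ k) atTop (𝓝 0) :=
  h.tendsto_altDeriv_of_antitone hk (h.convex_antitone hk).2

lemma altDeriv_nonneg (h : IsdMonotoneGenerator d ψ) {k : ℕ} (hk : k ≤ d - 2) {z : ℝ}
    (hz : 0 < z) : 0 ≤ altDeriv ψ k z := by
  refine le_of_tendsto (h.tendsto_altDeriv hk) ?_
  filter_upwards [eventually_ge_atTop z] with w hw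
  exact (h.convex_antitone hk).2 hz (hz.trans_le hw) hw

/-- If one of the sign-adjusted derivatives vanishes at a point, so does `ψ`. -/
lemma psi_eq_zero (h : IsdMonotoneGenerator d ψ) {s : ℝ} (hs : 0 < s) :
    ∀ k ≤ d - 2, altDeriv ψ k s = 0 → ψ s = 0 := by
  intro k
  induction k with
  | zero => intro _ h0; rwa [altDeriv_zero] at h0
  | succ k ih =>
    intro hk h0
    have hca := h.convex_antitone (k := k) (by omega)
    refine ih (by omega) (eq_zero_of_deriv_eq_zero hca.1 hca.2 (h.tendsto_altDeriv (by omega)) hs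
      (h.differentiableAt_altDeriv hk hs) ?_)
    rw [deriv_altDeriv, h0, neg_zero]

lemma psi_eq_zero_of_deriv (h : IsdMonotoneGenerator d ψ) {s : ℝ} (hs : 0 < s) {k : ℕ}
    (hk : k ≤ d - 2) (hd : DifferentiableAt ℝ (altDeriv ψ k) s)
    (h0 : altDeriv ψ (k + 1) s = 0) : ψ s = 0 := by
  have hca := h.convex_antitone hk
  refine h.psi_eq_zero hs k hk
    (eq_zero_of_deriv_eq_zero hca.1 hca.2 (h.tendsto_altDeriv hk) hs hd ?_)
  rw [deriv_altDeriv, h0, neg_zero]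

/-- Convex functions on the half-line are differentiable almost everywhere. -/
lemma ae_differentiableAt (h : IsdMonotoneGenerator d ψ) {k : ℕ} (hk : k ≤ d - 2) :
    ∀ᵐ z : ℝ, 0 < z → DifferentiableAt ℝ (altDeriv ψ k) z := by
  have h1 : MonotoneOn (fun z => -altDeriv ψ k z) (Ioi 0) := (h.convex_antitone hk).2.neg
  filter_upwards [h1.ae_differentiableWithinAt_of_mem] with z hz hz0
  have := ((hz hz0).differentiableAt (Ioi_mem_nhds hz0)).neg
  simpa using this

end IsdMonotoneGenerator

/-! ### Convergence of generators and of their derivatives -/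

/-- If convex functions converge pointwise to `f`, then their left derivatives along `sₙ → s`
converge to `f'(s)`: they are squeezed between slopes of secants lying on either side of `s`. -/
lemma tendsto_leftDeriv {F : ℕ → ℝ → ℝ} {f : ℝ → ℝ} (hF : ∀ n, ConvexOn ℝ (Ioi 0) (F n))
    (hlim : ∀ z, 0 < z → Tendsto (fun n => F n z) atTop (𝓝 (f z))) {s : ℝ} (hs : 0 < s)
    (hd : DifferentiableAt ℝ f s) {u : ℕ → ℝ} (hu : Tendsto u atTop (𝓝 s)) :
    Tendsto (fun n => leftDeriv (F n) (u n)) atTop (𝓝 (deriv f s)) := by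
  have hslope : ∀ a b, 0 < a → 0 < b →
      Tendsto (fun n => slope (F n) a b) atTop (𝓝 (slope f a b)) := by
    intro a b ha hb
    simp only [slope_def_field]
    exact ((hlim b hb).sub (hlim a ha)).div_const _
  have hds : Tendsto (slope f s) (𝓝[≠] s) (𝓝 (deriv f s)) :=
    hasDerivAt_iff_tendsto_slope.1 hd.hasDerivAt
  have hleft : ∀ n y, 0 < y → HasDerivWithinAt (F n) (leftDeriv (F n) y) (Iio y) y := fun n y hy =>
    (hF n).hasDerivWithinAt_leftDeriv_of_mem_interior (by rwa [interior_Ioi])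
  have hpos : ∀ᶠ n in atTop, 0 < u n := hu.eventually_const_lt hs
  -- moving the endpoint `s` of the secant slightly keeps the slope strictly on the same side
  have hcont : ∀ e, e ≠ s → ContinuousAt (fun c => slope f c e) s := by
    intro e he
    simp only [slope_def_field]
    exact (continuousAt_const.sub hd.continuousAt).div (continuousAt_const.sub continuousAt_id)
      (sub_ne_zero.2 he)
  rw [tendsto_order]
  constructor
  · intro a ha
    obtain ⟨e, ⟨hea, he0⟩, hes⟩ : ∃ e, (a < slope f s e ∧ 0 < e) ∧ e < s := by
      have h1 := (hds.mono_left (nhdsWithin_mono s (fun x hx => ne_of_lt hx :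
        Iio s ⊆ {s}ᶜ))).eventually_const_lt ha
      have h2 : ∀ᶠ e in 𝓝[<] s, 0 < e := mem_nhdsWithin_of_mem_nhds (Ioi_mem_nhds hs)
      exact ((h1.and h2).and self_mem_nhdsWithin).exists
    obtain ⟨c, ⟨hc, hec⟩, hcs⟩ : ∃ c, (a < slope f c e ∧ e < c) ∧ c < s := by
      have h1 : ∀ᶠ c in 𝓝[<] s, a < slope f c e :=
        mem_nhdsWithin_of_mem_nhds ((hcont e hes.ne).eventually_const_lt hea)
      have h2 : ∀ᶠ c in 𝓝[<] s, e < c := mem_nhdsWithin_of_mem_nhds (Ioi_mem_nhds hes)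
      exact ((h1.and h2).and self_mem_nhdsWithin).exists
    have hc0 : 0 < c := he0.trans hec
    rw [slope_comm] at hc
    filter_upwards [hpos, hu.eventually_const_lt hcs, (hslope e c he0 hc0).eventually_const_lt hc]
      with n hn0 hnc hna
    refine hna.trans_le (le_trans ?_
      ((hF n).slope_le_of_hasDerivWithinAt_Iio hc0 hn0 hnc (hleft n _ hn0)))
    simpa only [slope_def_field] using (hF n).slope_mono_adjacent he0 hn0 hec hnc
  · intro a ha
    obtain ⟨e, hea, hes⟩ : ∃ e, slope f s e < a ∧ s < e := by
      have h1 := (hds.mono_left (nhdsWithin_mono s (fun x hx => ne_of_gt hx :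
        Ioi s ⊆ {s}ᶜ))).eventually_lt_const ha
      exact (h1.and self_mem_nhdsWithin).exists
    obtain ⟨c, ⟨hc, hec⟩, hcs⟩ : ∃ c, (slope f c e < a ∧ c < e) ∧ s < c := by
      have h1 : ∀ᶠ c in 𝓝[>] s, slope f c e < a :=
        mem_nhdsWithin_of_mem_nhds ((hcont e hes.ne').eventually_lt_const hea)
      have h2 : ∀ᶠ c in 𝓝[>] s, c < e := mem_nhdsWithin_of_mem_nhds (Iio_mem_nhds hes)
      exact ((h1.and h2).and self_mem_nhdsWithin).exists
    have hc0 : 0 < c := hs.trans hcs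
    have he0 : 0 < e := hs.trans hes
    filter_upwards [hpos, hu.eventually_lt_const hcs, (hslope c e hc0 he0).eventually_lt_const hc]
      with n hn0 hnc hna
    refine lt_of_le_of_lt ?_ hna
    have h1 : leftDeriv (F n) (u n) ≤ derivWithin (F n) (Ioi (u n)) (u n) :=
      (hF n).leftDeriv_le_rightDeriv_of_mem_interior (by rwa [interior_Ioi])
    have h2 := (hF n).rightDeriv_le_slope_of_mem_interior
      (by rwa [interior_Ioi] : u n ∈ interior (Ioi 0)) hc0 hnc
    have h3 := (hF n).slope_mono_adjacent hn0 he0 hnc hec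
    simp only [slope_def_field] at h2 ⊢
    linarith

lemma leftDeriv_of_differentiableAt {f : ℝ → ℝ} {s : ℝ} (hd : DifferentiableAt ℝ f s) :
    leftDeriv f s = deriv f s :=
  hd.hasDerivAt.hasDerivWithinAt.derivWithin (uniqueDiffWithinAt_Iio s)

lemma leftDeriv_altDeriv {ψ : ℝ → ℝ} {k : ℕ} (z : ℝ) :
    leftDeriv (altDeriv ψ k) z = (-1) ^ k * leftDeriv (deriv^[k] ψ) z := by
  unfold leftDeriv altDeriv
  exact derivWithin_const_mul_field _

/-- Uniform convergence of the copulas, and the normalisation, force pointwise convergence of the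
generators. The set of arguments at which convergence holds contains `1` and is closed
under sums and, where `ψ` is positive at the argument to be halved, under halving; so it contains
all dyadic numbers, and monotonicity does the rest. -/
lemma tendsto_generator_s6 {d : ℕ} (hd : 3 ≤ d) {ψ : ℝ → ℝ} {Ψ : ℕ → ℝ → ℝ}
    (hψ : IsGenerator ψ) (hψnorm : ψ 1 = 1 / 2)
    (hΨ : ∀ n, IsGenerator (Ψ n)) (hΨnorm : ∀ n, Ψ n 1 = 1 / 2)
    (hconv : TendstoUniformlyOn (fun n => archCopula d (Ψ n)) (archCopula d ψ) atTop
      {x | ∀ i, x i ∈ Icc (0 : ℝ) 1}) {r : ℝ} (hr : 0 < r) :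
    Tendsto (fun n => Ψ n r) atTop (𝓝 (ψ r)) := by
  have hcopula : ∀ (x : ℕ → Fin d → ℝ) (x₀ : Fin d → ℝ), (∀ n i, x n i ∈ Icc (0 : ℝ) 1) →
      (∀ i, x₀ i ∈ Icc (0 : ℝ) 1) → Tendsto x atTop (𝓝 x₀) →
      Tendsto (fun n => archCopula d (Ψ n) (x n)) atTop (𝓝 (archCopula d ψ x₀)) := by
    intro x x₀ hx hx₀ hlim
    exact hconv.tendsto_comp (hψ.archCopula_continuousOn d x₀ hx₀)
      (tendsto_nhdsWithin_iff.2 ⟨hlim, Eventually.of_forall hx⟩)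
  have hmem : ∀ {χ : ℝ → ℝ}, IsGenerator χ → ∀ z, psiExt χ z ∈ Icc (0 : ℝ) 1 := fun h z =>
    ⟨h.psiExt_nonneg z, h.psiExt_le_one z⟩
  let i₀ : Fin d := ⟨0, by omega⟩
  let i₁ : Fin d := ⟨1, by omega⟩
  have hi : i₀ ≠ i₁ := by simp [i₀, i₁, Fin.ext_iff]
  let P : ℝ≥0∞ → Prop := fun z => Tendsto (fun n => psiExt (Ψ n) z) atTop (𝓝 (psiExt ψ z))
  have P0 : P 0 := by
    simp only [P, hψ.psiExt_zero, (hΨ _).psiExt_zero]; exact tendsto_const_nhds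
  have P1 : P 1 := by
    have : ∀ χ : ℝ → ℝ, psiExt χ 1 = χ 1 := fun χ => by simp [psiExt]
    simp only [P, this, hψnorm, hΨnorm]; exact tendsto_const_nhds
  have Padd : ∀ s t, P s → P t → P (s + t) := by
    intro s t hs ht
    let z : Fin d → ℝ≥0∞ := Pi.single i₀ s + Pi.single i₁ t
    have hz : ∑ i, z i = s + t := by
      simp [z, Finset.sum_add_distrib]
    have hPz : ∀ i, P (z i) := by
      intro i
      by_cases h0 : i = i₀
      · subst h0; simpa [z, hi] using hs
      · by_cases h1 : i = i₁
        · subst h1; simpa [z, h0] using ht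
        · simpa [z, h0, h1] using P0
    have := hcopula (fun n i => psiExt (Ψ n) (z i)) (fun i => psiExt ψ (z i))
      (fun n i => hmem (hΨ n) _) (fun i => hmem hψ _) (tendsto_pi_nhds.2 hPz)
    simp only [hψ.archCopula_psiExt, (hΨ _).archCopula_psiExt, hz] at this
    exact this
  have Phalf : ∀ s, 0 < psiExt ψ (s + s) → P (s + s) → P s := by
    intro s hpos hs
    refine tendsto_of_subseq_tendsto fun ns hns => ?_
    obtain ⟨b, hb, ms, hms, hlim⟩ := isCompact_Icc.tendsto_subseq
      (x := fun n => psiExt (Ψ (ns n)) s) (fun n => hmem (hΨ _) s)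
    refine ⟨ms, ?_⟩
    replace hlim : Tendsto (fun n => psiExt (Ψ (ns (ms n))) s) atTop (𝓝 b) := hlim
    -- the value of the copula at the cluster point `(b, b, 1, …, 1)` identifies `b`
    let z : ℝ≥0∞ → Fin d → ℝ≥0∞ := fun s => Pi.single i₀ s + Pi.single i₁ s
    have hz : ∀ s, ∑ i, z s i = s + s := by
      intro s
      simp [z, Finset.sum_add_distrib]
    have hzlim : ∀ i, Tendsto (fun n => psiExt (Ψ (ns (ms n))) (z s i)) atTop
        (𝓝 (psiExt ψ (z (pseudoInv ψ b) i))) := by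
      have hb' := hψ.psiExt_pseudoInv hb
      intro i
      by_cases h0 : i = i₀
      · subst h0; simpa [z, hi, hb'] using hlim
      · by_cases h1 : i = i₁
        · subst h1; simpa [z, h0, hb'] using hlim
        · simp only [z, Pi.add_apply, ne_eq, h0, not_false_eq_true, Pi.single_eq_of_ne, h1, add_zero,
            hψ.psiExt_zero, (hΨ _).psiExt_zero]
          exact tendsto_const_nhds
    have hsub : Tendsto (fun n => ns (ms n)) atTop atTop := hns.comp hms.tendsto_atTop
    have hC : Tendsto (fun n => archCopula d (Ψ (ns (ms n)))
        (fun i => psiExt (Ψ (ns (ms n))) (z s i))) atTop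
        (𝓝 (archCopula d ψ (fun i => psiExt ψ (z (pseudoInv ψ b) i)))) := by
      have huni : TendstoUniformlyOn (fun n => archCopula d (Ψ (ns (ms n)))) (archCopula d ψ) atTop
          {x | ∀ i, x i ∈ Icc (0 : ℝ) 1} := fun u hu => hsub.eventually (hconv u hu)
      exact huni.tendsto_comp (hψ.archCopula_continuousOn d _ fun i => hmem hψ _)
        (tendsto_nhdsWithin_iff.2 ⟨tendsto_pi_nhds.2 hzlim,
          Eventually.of_forall fun n i => hmem (hΨ _) _⟩)
    simp only [hψ.archCopula_psiExt, (hΨ _).archCopula_psiExt, hz] at hC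
    have heq := tendsto_nhds_unique hC (hs.comp hsub)
    have h1 : s + s ≤ pseudoInv ψ 0 := (hψ.psiExt_pos_iff.1 hpos).le
    have h2 : pseudoInv ψ b + pseudoInv ψ b ≤ pseudoInv ψ 0 :=
      (hψ.psiExt_pos_iff.1 (heq ▸ hpos)).le
    have h3 : pseudoInv ψ b + pseudoInv ψ b = s + s := by
      rw [← hψ.pseudoInv_psiExt h1, ← heq, hψ.pseudoInv_psiExt h2]
    have h4 : pseudoInv ψ b = s := by
      rw [← two_mul, ← two_mul] at h3
      exact (ENNReal.mul_right_inj two_ne_zero ENNReal.ofNat_ne_top).1 h3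
    have h5 : psiExt ψ s = b := by rw [← h4, hψ.psiExt_pseudoInv hb]
    rw [h5]
    exact hlim
  have Pdyadic : ∀ k : ℕ, P (ENNReal.ofReal ((1 / 2) ^ k)) := by
    intro k
    induction k with
    | zero => simpa using P1
    | succ k ih =>
      have hsum : ENNReal.ofReal ((1 / 2) ^ (k + 1)) + ENNReal.ofReal ((1 / 2) ^ (k + 1))
          = ENNReal.ofReal ((1 / 2) ^ k) := by
        rw [← ENNReal.ofReal_add (by positivity) (by positivity)]
        congr 1; rw [pow_succ]; ring
      refine Phalf _ ?_ (by rwa [hsum])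
      rw [hsum, psiExt_coe ψ (by positivity)]
      have : ψ 1 ≤ ψ ((1 / 2) ^ k) := hψ.antitoneOn (mem_Ici.2 (by positivity))
        (mem_Ici.2 zero_le_one) (pow_le_one₀ (by norm_num) (by norm_num))
      rw [hψnorm] at this
      linarith
  have Pmul : ∀ k m : ℕ, P (ENNReal.ofReal (m * (1 / 2) ^ k)) := by
    intro k m
    induction m with
    | zero => simpa using P0
    | succ m ih =>
      have := Padd _ _ ih (Pdyadic k)
      rw [← ENNReal.ofReal_add (by positivity) (by positivity)] at this
      convert this using 2
      push_cast; ring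
  have Preal : ∀ k m : ℕ, Tendsto (fun n => Ψ n (m * (1 / 2) ^ k)) atTop
      (𝓝 (ψ (m * (1 / 2) ^ k))) := by
    intro k m
    have := Pmul k m
    simp only [P] at this
    simpa only [psiExt_coe _ (by positivity : (0 : ℝ) ≤ m * (1 / 2) ^ k)] using this
  have hdense : ∀ a b : ℝ, 0 ≤ a → a < b → ∃ k m : ℕ, a < m * (1 / 2) ^ k ∧
      (m : ℝ) * (1 / 2) ^ k < b := by
    intro a b ha hab
    obtain ⟨k, hk⟩ := exists_pow_lt_of_lt_one (sub_pos.2 hab) (by norm_num : (1 / 2 : ℝ) < 1)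
    have hp : (0 : ℝ) < (1 / 2) ^ k := by positivity
    refine ⟨k, ⌊a / (1 / 2) ^ k⌋₊ + 1, ?_, ?_⟩
    · have := Nat.lt_floor_add_one (a / (1 / 2 : ℝ) ^ k)
      rw [div_lt_iff₀ hp] at this
      exact_mod_cast this
    · have := Nat.floor_le (div_nonneg ha hp.le)
      rw [le_div_iff₀ hp] at this
      push_cast
      linarith
  have hcr : ContinuousAt ψ r := hψ.continuousOn.continuousAt (Ici_mem_nhds hr)
  rw [tendsto_order]
  constructor
  · intro a ha
    obtain ⟨δ, hδ, hball⟩ := Metric.eventually_nhds_iff.1 (hcr.eventually_const_lt ha)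
    obtain ⟨k, m, h1, h2⟩ := hdense r (r + δ) hr.le (by linarith)
    have h3 : a < ψ (m * (1 / 2) ^ k) := hball (by rw [Real.dist_eq, abs_lt]; constructor <;> linarith)
    filter_upwards [(Preal k m).eventually_const_lt h3] with n hn
    exact hn.trans_le ((hΨ n).antitoneOn hr.le (hr.le.trans h1.le) h1.le)
  · intro a ha
    obtain ⟨δ, hδ, hball⟩ := Metric.eventually_nhds_iff.1 (hcr.eventually_lt_const ha)
    obtain ⟨k, m, h1, h2⟩ := hdense (max 0 (r - δ)) r (le_max_left _ _) (max_lt hr (by linarith))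
    have h0 : (0 : ℝ) ≤ m * (1 / 2) ^ k := by positivity
    have h3 : ψ (m * (1 / 2) ^ k) < a := hball (by
      rw [Real.dist_eq, abs_lt]; constructor <;> linarith [(le_max_right _ _).trans_lt h1])
    filter_upwards [(Preal k m).eventually_lt_const h3] with n hn
    exact ((hΨ n).antitoneOn h0 hr.le h2.le).trans_lt hn

lemma tendsto_pseudoInv {ψ : ℝ → ℝ} {Ψ : ℕ → ℝ → ℝ} (hψ : IsGenerator ψ)
    (hΨ : ∀ n, IsGenerator (Ψ n))
    (hlim : ∀ r, 0 < r → Tendsto (fun n => Ψ n r) atTop (𝓝 (ψ r))) {y : ℝ}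
    (hy : y ∈ Ioo (0 : ℝ) 1) :
    Tendsto (fun n => pseudoInv (Ψ n) y) atTop (𝓝 (pseudoInv ψ y)) := by
  have hy' : y ∈ Icc (0 : ℝ) 1 := Ioo_subset_Icc_self hy
  have hext : ∀ z : ℝ≥0∞, Tendsto (fun n => psiExt (Ψ n) z) atTop (𝓝 (psiExt ψ z)) := by
    intro z
    by_cases hz : z = ∞
    · simp only [hz, psiExt_top]; exact tendsto_const_nhds
    · by_cases hz0 : z = 0
      · simp only [hz0, hψ.psiExt_zero, (hΨ _).psiExt_zero]; exact tendsto_const_nhds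
      · simp only [psiExt, hz, if_false]
        exact hlim _ (ENNReal.toReal_pos hz0 hz)
  rw [tendsto_order]
  constructor
  · intro a ha
    filter_upwards [(hext a).eventually_const_lt ((hψ.lt_pseudoInv_iff hy').1 ha)] with n hn
    exact ((hΨ n).lt_pseudoInv_iff hy').2 hn
  · intro b hb
    obtain ⟨z, hz1, hz2⟩ := exists_between hb
    filter_upwards [(hext z).eventually_lt_const (hψ.psiExt_lt_of_lt ⟨hy.1, hy.2.le⟩ hz1)] with n hn
    exact (((hΨ n).pseudoInv_le_iff hy').2 hn.le).trans_lt hz2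

lemma tendsto_altDeriv_seq {d : ℕ} {ψ : ℝ → ℝ} {Ψ : ℕ → ℝ → ℝ}
    (hψ : IsdMonotoneGenerator d ψ) (hΨ : ∀ n, IsdMonotoneGenerator d (Ψ n))
    (hlim : ∀ r, 0 < r → Tendsto (fun n => Ψ n r) atTop (𝓝 (ψ r))) :
    ∀ k ≤ d - 2, ∀ z, 0 < z →
      Tendsto (fun n => altDeriv (Ψ n) k z) atTop (𝓝 (altDeriv ψ k z)) := by
  intro k
  induction k with
  | zero => intro _ z hz; simpa only [altDeriv_zero] using hlim z hz
  | succ k ih =>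
    intro hk z hz
    have h1 := tendsto_leftDeriv (fun n => ((hΨ n).convex_antitone (by omega)).1) (ih (by omega)) hz
      (hψ.differentiableAt_altDeriv hk hz) tendsto_const_nhds
    simp only [leftDeriv_of_differentiableAt ((hΨ _).differentiableAt_altDeriv hk hz),
      deriv_altDeriv] at h1
    simpa using h1.neg

/-- Convergence of `D⁻ψₙ⁽ᵈ⁻²⁾` along convergent arguments, at a differentiability point of the
limit. -/
lemma tendsto_DpsiExt {d : ℕ} {ψ : ℝ → ℝ} {Ψ : ℕ → ℝ → ℝ}
    (hψ : IsdMonotoneGenerator d ψ) (hΨ : ∀ n, IsdMonotoneGenerator d (Ψ n))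
    (hlim : ∀ r, 0 < r → Tendsto (fun n => Ψ n r) atTop (𝓝 (ψ r))) {s : ℝ} (hs : 0 < s)
    (hd : DifferentiableAt ℝ (altDeriv ψ (d - 2)) s) {Z : ℕ → ℝ≥0∞}
    (hZ : Tendsto Z atTop (𝓝 (ENNReal.ofReal s))) :
    Tendsto (fun n => DpsiExt d (Ψ n) (Z n)) atTop (𝓝 (DpsiExt d ψ (ENNReal.ofReal s))) := by
  have hu : Tendsto (fun n => (Z n).toReal) atTop (𝓝 s) := by
    have := (ENNReal.tendsto_toReal ENNReal.ofReal_ne_top).comp hZ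
    rwa [ENNReal.toReal_ofReal hs.le] at this
  have h1 := tendsto_leftDeriv (fun n => ((hΨ n).convex_antitone le_rfl).1)
    (tendsto_altDeriv_seq hψ hΨ hlim _ le_rfl) hs hd hu
  rw [← leftDeriv_of_differentiableAt hd] at h1
  simp only [leftDeriv_altDeriv] at h1
  have h2 := h1.const_mul ((-1 : ℝ) ^ (d - 2))
  have hsq : ((-1 : ℝ) ^ (d - 2)) * (-1) ^ (d - 2) = 1 := by
    rw [← mul_pow]; norm_num
  simp only [← mul_assoc, hsq, one_mul] at h2
  have h3 : DpsiExt d ψ (ENNReal.ofReal s) = leftDeriv (deriv^[d - 2] ψ) s := by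
    simp [DpsiExt, ENNReal.toReal_ofReal hs.le]
  rw [h3]
  refine h2.congr' ?_
  filter_upwards [hZ.eventually_lt_const ENNReal.ofReal_lt_top] with n hn
  simp [DpsiExt, hn.ne]

/-! ### Integrating the marginal density -/

/-- The fundamental theorem of calculus on `(a,∞)` for a convex antitone function vanishing at
infinity. At the points where `f` is not differentiable, which form a null set, `deriv f` has the
junk value `0`. -/
lemma lintegral_neg_deriv {f : ℝ → ℝ} (hc : ConvexOn ℝ (Ioi 0) f)
    (ha : AntitoneOn f (Ioi 0)) (ht : Tendsto f atTop (𝓝 0)) {a : ℝ} (ha0 : 0 ≤ a)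
    (hcont : ContinuousOn f (Ici a)) :
    ∫⁻ x in Ioi a, ENNReal.ofReal (-deriv f x) = ENNReal.ofReal (f a) := by
  set r : ℝ → ℝ := fun x => derivWithin f (Ioi x) x with hr
  have hright : ∀ x, 0 < x → HasDerivWithinAt f (r x) (Ioi x) x := fun x hx =>
    hc.hasDerivWithinAt_rightDeriv_of_mem_interior (by rwa [interior_Ioi])
  have hrnp : ∀ x, 0 < x → r x ≤ 0 := by
    intro x hx
    have h1 := hc.rightDeriv_le_slope_of_mem_interior
      (by rwa [interior_Ioi] : x ∈ interior (Ioi 0)) (mem_Ioi.2 (by linarith) : x + 1 ∈ Ioi 0)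
      (by linarith)
    refine h1.trans ?_
    rw [slope_def_field]
    have := ha hx (mem_Ioi.2 (by linarith) : x + 1 ∈ Ioi 0) (by linarith)
    simpa using this
  have hae : ∀ᵐ x : ℝ, 0 < x → deriv f x = r x := by
    have h1 : MonotoneOn (fun z => -f z) (Ioi 0) := ha.neg
    filter_upwards [h1.ae_differentiableWithinAt_of_mem] with x hx hx0
    have hd : DifferentiableAt ℝ f x := by
      simpa using ((hx hx0).differentiableAt (Ioi_mem_nhds hx0)).neg
    exact (hd.hasDerivAt.hasDerivWithinAt.derivWithin (uniqueDiffWithinAt_Ioi x)).symm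
  have hfin : ∀ b, a ≤ b →
      ∫⁻ x in Ioc a b, ENNReal.ofReal (-deriv f x) = ENNReal.ofReal (f a - f b) := by
    intro b hab
    have hg : ContinuousOn (fun x => -f x) (Icc a b) := (hcont.mono Icc_subset_Ici_self).neg
    have hgd : ∀ x ∈ Ioo a b, HasDerivWithinAt (fun x => -f x) (-r x) (Ioi x) x := fun x hx =>
      (hright x (ha0.trans_lt hx.1)).neg
    have hintg : IntegrableOn (fun x => -r x) (Ioc a b) :=
      intervalIntegral.integrableOn_deriv_right_of_nonneg hg hgd
        fun x hx => neg_nonneg.2 (hrnp x (ha0.trans_lt hx.1))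
    have hftc := intervalIntegral.integral_eq_sub_of_hasDeriv_right_of_le hab hg hgd
      ((intervalIntegrable_iff_integrableOn_Ioc_of_le hab).2 hintg)
    rw [intervalIntegral.integral_of_le hab] at hftc
    have hcongr : ∫⁻ x in Ioc a b, ENNReal.ofReal (-deriv f x)
        = ∫⁻ x in Ioc a b, ENNReal.ofReal (-r x) := by
      refine lintegral_congr_ae ?_
      rw [EventuallyEq, ae_restrict_iff' measurableSet_Ioc]
      filter_upwards [hae] with x hx hxab
      rw [hx (ha0.trans_lt hxab.1)]
    rw [hcongr, ← ofReal_integral_eq_lintegral_ofReal hintg, hftc]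
    · congr 1; ring
    · rw [EventuallyLE, ae_restrict_iff' measurableSet_Ioc]
      exact Eventually.of_forall fun x hx => neg_nonneg.2 (hrnp x (ha0.trans_lt hx.1))
  have hcover : AECover (volume.restrict (Ioi a)) atTop (fun b : ℝ => Iic b) :=
    aecover_Iic tendsto_id
  refine hcover.lintegral_eq_of_tendsto _ (measurable_deriv f).neg.ennreal_ofReal.aemeasurable ?_
  have hlim : Tendsto (fun b => ENNReal.ofReal (f a - f b)) atTop (𝓝 (ENNReal.ofReal (f a))) := by
    have := ENNReal.tendsto_ofReal (ht.const_sub (f a))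
    rwa [sub_zero] at this
  refine hlim.congr' ?_
  filter_upwards [eventually_ge_atTop a] with b hb
  rw [Measure.restrict_restrict measurableSet_Iic, Iic_inter_Ioi, hfin b hb]

lemma measurable_altDeriv_succ (ψ : ℝ → ℝ) (k : ℕ) : Measurable (altDeriv ψ (k + 1)) := by
  have h := measurable_deriv (altDeriv ψ k)
  have h2 : altDeriv ψ (k + 1) = fun z => -deriv (altDeriv ψ k) z := by
    funext z; rw [deriv_altDeriv, neg_neg]
  rw [h2]; exact h.neg

namespace IsdMonotoneGenerator

variable {d : ℕ} {ψ : ℝ → ℝ}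

lemma lintegral_altDeriv (h : IsdMonotoneGenerator d ψ) {k : ℕ} (hk : k ≤ d - 2) {a : ℝ}
    (ha : 0 ≤ a) (hak : 0 < a ∨ k = 0) :
    ∫⁻ t in Ioi 0, ENNReal.ofReal (altDeriv ψ (k + 1) (t + a)) =
      ENNReal.ofReal (altDeriv ψ k a) := by
  have hca := h.convex_antitone hk
  have hcont : ContinuousOn (altDeriv ψ k) (Ici a) := by
    rcases hak with ha' | rfl
    · have := hca.1.continuousOn_interior
      rw [interior_Ioi] at this
      exact this.mono fun x hx => ha'.trans_le hx
    · rw [altDeriv_zero]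
      exact h.toIsGenerator.continuousOn.mono fun x hx => ha.trans hx
  have h1 := lintegral_neg_deriv hca.1 hca.2 (h.tendsto_altDeriv hk) ha hcont
  simp only [deriv_altDeriv, neg_neg] at h1
  have h2 := (measurePreserving_add_right volume a).setLIntegral_comp_preimage_emb
    (measurableEmbedding_addRight a) (fun x => ENNReal.ofReal (altDeriv ψ (k + 1) x)) (Ioi a)
  have h3 : (fun x : ℝ => x + a) ⁻¹' Ioi a = Ioi 0 := by simp
  rw [h3] at h2
  rw [h2, h1]

/-- Peeling off one variable at a time, the integral of `(-1)ᵏψ⁽ᵏ⁾(t₁ + ⋯ + tₖ)` over the positive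
orthant reduces to `ψ 0`. -/
lemma lintegral_pi (h : IsdMonotoneGenerator d ψ) : ∀ k ≤ d - 2 + 1,
    ∫⁻ t : Fin k → ℝ, ENNReal.ofReal (altDeriv ψ k (∑ i, t i))
      ∂(Measure.pi fun _ => (volume : Measure ℝ).restrict (Ioi 0)) = 1 := by
  intro k
  induction k with
  | zero => simp [altDeriv_zero, h.toIsGenerator.map_zero]
  | succ k ih =>
    intro hk
    have hmp := measurePreserving_piFinSuccAbove
      (fun _ : Fin (k + 1) => (volume : Measure ℝ).restrict (Ioi 0)) 0
    have hmeas : Measurable fun p : ℝ × (Fin k → ℝ) =>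
        ENNReal.ofReal (altDeriv ψ (k + 1) (p.1 + ∑ i, p.2 i)) :=
      ((measurable_altDeriv_succ ψ k).comp (by fun_prop)).ennreal_ofReal
    have h1 : ∫⁻ t : Fin (k + 1) → ℝ, ENNReal.ofReal (altDeriv ψ (k + 1) (∑ i, t i))
        ∂(Measure.pi fun _ => (volume : Measure ℝ).restrict (Ioi 0)) =
        ∫⁻ p : ℝ × (Fin k → ℝ), ENNReal.ofReal (altDeriv ψ (k + 1) (p.1 + ∑ i, p.2 i))
          ∂(((volume : Measure ℝ).restrict (Ioi 0)).prod
            (Measure.pi fun _ => (volume : Measure ℝ).restrict (Ioi 0))) := by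
      rw [← hmp.lintegral_comp hmeas]
      refine lintegral_congr fun t => ?_
      simp [Fin.sum_univ_succ, MeasurableEquiv.piFinSuccAbove, Fin.tail]
    rw [h1, lintegral_prod_symm' _ hmeas, ← ih (by omega)]
    refine lintegral_congr_ae ?_
    have hpos : ∀ᵐ t : Fin k → ℝ ∂(Measure.pi fun _ => (volume : Measure ℝ).restrict (Ioi 0)),
        ∀ i, 0 < t i := by
      rw [← Measure.restrict_pi_pi]
      filter_upwards [ae_restrict_mem (MeasurableSet.univ_pi fun _ => measurableSet_Ioi)] with t ht i
      exact ht i (mem_univ i)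
    filter_upwards [hpos] with t ht
    refine h.lintegral_altDeriv (by omega) (Finset.sum_nonneg fun i _ => (ht i).le) ?_
    rcases Nat.eq_zero_or_pos k with rfl | hk0
    · exact Or.inr rfl
    · left
      have : Nonempty (Fin k) := ⟨⟨0, hk0⟩⟩
      exact Finset.sum_pos (fun i _ => ht i) Finset.univ_nonempty

end IsdMonotoneGenerator

/-! ### The kernel as a quotient and the set `Λ` -/

namespace IsdMonotoneGenerator

variable {d : ℕ} {ψ : ℝ → ℝ}

/-- Zeros of `ψ` are minima of the non-negative functions `(-1)ᵏψ⁽ᵏ⁾`, so all derivatives vanish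
there. -/
lemma altDeriv_eq_zero (h : IsdMonotoneGenerator d ψ) {s : ℝ} (hs : 0 < s) (h0 : ψ s = 0) :
    ∀ k ≤ d - 2 + 1, altDeriv ψ k s = 0 := by
  intro k
  induction k with
  | zero => intro _; rwa [altDeriv_zero]
  | succ k ih =>
    intro hk
    have hmin : IsLocalMin (altDeriv ψ k) s := by
      filter_upwards [Ioi_mem_nhds hs] with z hz
      rw [ih (by omega)]
      exact h.altDeriv_nonneg (by omega) hz
    have := hmin.deriv_eq_zero
    rw [deriv_altDeriv] at this
    linarith

lemma DpsiExt_eq_zero (h : IsdMonotoneGenerator d ψ) {z : ℝ≥0∞} (hz : pseudoInv ψ 0 < z) :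
    DpsiExt d ψ z = 0 := by
  by_cases hzt : z = ∞
  · simp [DpsiExt, hzt]
  · have hφ : pseudoInv ψ 0 ≠ ∞ := (hz.trans_le le_top).ne
    have hlt : (pseudoInv ψ 0).toReal < z.toReal := (ENNReal.toReal_lt_toReal hφ hzt).2 hz
    have hev : altDeriv ψ (d - 2) =ᶠ[𝓝 z.toReal] fun _ => 0 := by
      filter_upwards [Ioi_mem_nhds hlt] with w hw
      have hw0 : 0 < w := ENNReal.toReal_nonneg.trans_lt hw
      refine h.altDeriv_eq_zero hw0 ?_ _ (by omega)
      rw [← psiExt_coe ψ hw0.le, h.toIsGenerator.psiExt_eq_zero_iff]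
      exact ENNReal.le_ofReal_iff_toReal_le hφ hw0.le |>.2 (le_of_lt hw)
    have h1 : leftDeriv (altDeriv ψ (d - 2)) z.toReal = 0 := by
      rw [leftDeriv_of_differentiableAt (hev.differentiableAt_iff.2 (differentiableAt_const _)),
        hev.deriv_eq, deriv_const]
    rw [leftDeriv_altDeriv] at h1
    simpa [DpsiExt, hzt] using h1

lemma DpsiExt_ne_zero (h : IsdMonotoneGenerator d ψ) {s : ℝ} (hs : 0 < s)
    (hlt : ENNReal.ofReal s < pseudoInv ψ 0)
    (hd : DifferentiableAt ℝ (altDeriv ψ (d - 2)) s) :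
    DpsiExt d ψ (ENNReal.ofReal s) ≠ 0 := by
  intro h0
  have h1 : leftDeriv (deriv^[d - 2] ψ) s = 0 := by
    simpa [DpsiExt, ENNReal.toReal_ofReal hs.le] using h0
  have h2 := leftDeriv_altDeriv (ψ := ψ) (k := d - 2) s
  rw [h1, mul_zero, leftDeriv_of_differentiableAt hd, deriv_altDeriv, neg_eq_zero] at h2
  have h3 := h.psi_eq_zero_of_deriv hs le_rfl hd h2
  have h4 := h.toIsGenerator.psiExt_pos_iff.2 hlt
  rw [psiExt_coe ψ hs.le, h3] at h4
  exact lt_irrefl _ h4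

/-- Below the threshold `f⁰(x)` the numerator of the kernel vanishes, so the quotient formula is
valid for all `y ∈ [0,1]`. -/
lemma markovKernel_eq (h : IsdMonotoneGenerator d ψ) {x : Fin (d - 1) → ℝ}
    (hx1 : ¬ ∀ i, x i = 1) (hx : ∑ i, pseudoInv ψ (x i) < pseudoInv ψ 0) {y : ℝ}
    (hy : y ∈ Icc (0 : ℝ) 1) :
    markovKernel d ψ x y = DpsiExt d ψ ((∑ i, pseudoInv ψ (x i)) + pseudoInv ψ y)
      / DpsiExt d ψ (∑ i, pseudoInv ψ (x i)) := by
  have hnz : ¬ (pseudoInv ψ 0 ≤ ∑ i, pseudoInv ψ (x i)) := not_le.2 hx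
  have hcond : ¬ ((∀ i, x i = 1) ∨ x ∈ zeroMarg d ψ) := by
    rintro (h1 | h2)
    · exact hx1 h1
    · exact hnz h2
  unfold markovKernel
  rw [if_neg hcond]
  split_ifs with hlt
  · rw [fZero, if_neg hnz, ← h.toIsGenerator.lt_pseudoInv_iff hy] at hlt
    rw [h.DpsiExt_eq_zero, zero_div]
    rwa [add_comm, ← ENNReal.sub_lt_iff_lt_right (ne_top_of_lt hx) hx.le]
  · rfl

/-- The values `s` of `φ(x₁) + ⋯ + φ(x_{d-1})` below `φ(0)` at which `ψ⁽ᵈ⁻²⁾` is differentiable. -/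
def goodSums (d : ℕ) (ψ : ℝ → ℝ) : Set ℝ :=
  {s | ENNReal.ofReal s < pseudoInv ψ 0 ∧ DifferentiableAt ℝ (altDeriv ψ (d - 2)) s}

/-- The points `t ∈ (0,∞)^{d-1}` whose coordinate sum is a good sum; `Λ` is the image of this set
under `ψ` applied coordinatewise. -/
def goodPoints (d : ℕ) (ψ : ℝ → ℝ) : Set (Fin (d - 1) → ℝ) :=
  {t | (∀ i, 0 < t i) ∧ ∑ i, t i ∈ goodSums d ψ}

lemma measurableSet_goodPoints (d : ℕ) (ψ : ℝ → ℝ) : MeasurableSet (goodPoints d ψ) := by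
  have h1 : MeasurableSet (goodSums d ψ) :=
    (measurableSet_lt ENNReal.measurable_ofReal measurable_const).inter
      (measurableSet_of_differentiableAt ℝ _)
  have h2 : MeasurableSet {t : Fin (d - 1) → ℝ | ∀ i, 0 < t i} := by
    rw [ofPred_forall]
    exact MeasurableSet.iInter fun i => measurableSet_lt measurable_const (measurable_pi_apply i)
  exact h2.inter (h1.preimage (by fun_prop))

lemma goodPoints_coord_lt {t : Fin (d - 1) → ℝ} (ht : t ∈ goodPoints d ψ) (i : Fin (d - 1)) :
    ENNReal.ofReal (t i) < pseudoInv ψ 0 :=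
  (ENNReal.ofReal_le_ofReal (Finset.single_le_sum (fun j _ => (ht.1 j).le)
    (Finset.mem_univ i))).trans_lt ht.2.1

lemma psi_mem_Ioo (h : IsdMonotoneGenerator d ψ) {r : ℝ} (hr : 0 < r)
    (hlt : ENNReal.ofReal r < pseudoInv ψ 0) : ψ r ∈ Ioo (0 : ℝ) 1 := by
  constructor
  · rw [← psiExt_coe ψ hr.le]
    exact h.toIsGenerator.psiExt_pos_iff.2 hlt
  · have := h.toIsGenerator.strictAnti le_rfl hr hlt.le
    rwa [h.toIsGenerator.map_zero] at this

lemma sum_pseudoInv (h : IsdMonotoneGenerator d ψ) {t : Fin (d - 1) → ℝ}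
    (ht : t ∈ goodPoints d ψ) :
    ∑ i, pseudoInv ψ (ψ (t i)) = ENNReal.ofReal (∑ i, t i) := by
  rw [ENNReal.ofReal_sum_of_nonneg fun i _ => (ht.1 i).le]
  exact Finset.sum_congr rfl fun i _ =>
    h.toIsGenerator.pseudoInv_ofReal (ht.1 i).le (goodPoints_coord_lt ht i).le

lemma differentiableAt_psi (h : IsdMonotoneGenerator d ψ) (hd : 3 ≤ d) {r : ℝ} (hr : 0 < r) :
    DifferentiableAt ℝ ψ r :=
  h.differentiable 0 (by omega) r hr

lemma deriv_psi_neg (h : IsdMonotoneGenerator d ψ) (hd : 3 ≤ d) {r : ℝ} (hr : 0 < r)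
    (hlt : ENNReal.ofReal r < pseudoInv ψ 0) : deriv ψ r < 0 := by
  have h1 : deriv ψ r = -altDeriv ψ 1 r := by
    rw [← deriv_altDeriv, altDeriv_zero]
  have h2 := h.altDeriv_nonneg (k := 1) (by omega) hr
  have h3 : altDeriv ψ 1 r ≠ 0 := fun h0 =>
    (h.psi_mem_Ioo hr hlt).1.ne' (h.psi_eq_zero hr 1 (by omega) h0)
  rw [h1]
  linarith [h2.lt_of_ne' h3]

lemma deriv_pseudoInv (h : IsdMonotoneGenerator d ψ) (hd : 3 ≤ d) {r : ℝ} (hr : 0 < r)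
    (hlt : ENNReal.ofReal r < pseudoInv ψ 0) :
    deriv (fun y => (pseudoInv ψ y).toReal) (ψ r) = (deriv ψ r)⁻¹ := by
  have hg := h.toIsGenerator
  have hmem := h.psi_mem_Ioo hr hlt
  have hinv : (pseudoInv ψ (ψ r)).toReal = r := by
    rw [hg.pseudoInv_ofReal hr.le hlt.le, ENNReal.toReal_ofReal hr.le]
  have hcont : ContinuousAt (fun y => (pseudoInv ψ y).toReal) (ψ r) :=
    (ENNReal.tendsto_toReal (hg.pseudoInv_ne_top ⟨hmem.1, hmem.2.le⟩)).comp
      (hg.pseudoInv_continuousOn.continuousAt (Icc_mem_nhds hmem.1 hmem.2))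
  refine (HasDerivAt.of_local_left_inverse (f := ψ) hcont ?_
    (h.deriv_psi_neg hd hr hlt).ne ?_).deriv
  · rw [hinv]
    exact (h.differentiableAt_psi hd hr).hasDerivAt
  · filter_upwards [Ioo_mem_nhds hmem.1 hmem.2] with y hy
    have h1 := hg.psiExt_pseudoInv (Ioo_subset_Icc_self hy)
    rwa [psiExt, if_neg (hg.pseudoInv_ne_top ⟨hy.1, hy.2.le⟩)] at h1

lemma margDensity_psi (h : IsdMonotoneGenerator d ψ) (hd : 3 ≤ d) {t : Fin (d - 1) → ℝ}
    (ht : t ∈ goodPoints d ψ) :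
    |∏ i, deriv ψ (t i)| * margDensity d ψ (fun i => ψ (t i))
      = altDeriv ψ (d - 1) (∑ i, t i) := by
  have hlt := goodPoints_coord_lt ht
  have hsum0 : 0 ≤ ∑ i, t i := Finset.sum_nonneg fun i _ => (ht.1 i).le
  have hcond : (∀ i, ψ (t i) ∈ Ioo (0 : ℝ) 1) ∧
      (∑ i, pseudoInv ψ (ψ (t i))) < pseudoInv ψ 0 :=
    ⟨fun i => h.psi_mem_Ioo (ht.1 i) (hlt i), by rw [h.sum_pseudoInv ht]; exact ht.2.1⟩
  rw [margDensity, if_pos hcond, h.sum_pseudoInv ht, ENNReal.toReal_ofReal hsum0]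
  simp_rw [h.deriv_pseudoInv hd (ht.1 _) (hlt _)]
  have hd1 : d - 1 = d - 2 + 1 := by omega
  have hleft := leftDeriv_altDeriv (ψ := ψ) (k := d - 2) (∑ i, t i)
  rw [leftDeriv_of_differentiableAt ht.2.2, deriv_altDeriv, ← hd1] at hleft
  have habs : |∏ i, deriv ψ (t i)| = (-1) ^ (d - 1) * ∏ i, deriv ψ (t i) := by
    have h1 : ∀ i, |deriv ψ (t i)| = -1 * deriv ψ (t i) := fun i => by
      rw [abs_of_neg (h.deriv_psi_neg hd (ht.1 i) (hlt i))]; ring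
    rw [Finset.abs_prod]
    simp_rw [h1]
    rw [Finset.prod_mul_distrib]
    simp
  have hne : ∏ i, deriv ψ (t i) ≠ 0 :=
    Finset.prod_ne_zero_iff.2 fun i _ => (h.deriv_psi_neg hd (ht.1 i) (hlt i)).ne
  have hpow : (-1 : ℝ) ^ (d - 1) = -(-1) ^ (d - 2) := by
    rw [hd1, pow_succ]; simp
  rw [habs, Finset.prod_inv_distrib, mul_assoc, mul_inv_cancel_left₀ hne, hpow]
  linarith

lemma hasFDerivAt_psi (h : IsdMonotoneGenerator d ψ) (hd : 3 ≤ d) {t : Fin (d - 1) → ℝ}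
    (ht : ∀ i, 0 < t i) :
    HasFDerivAt (fun t : Fin (d - 1) → ℝ => fun i => ψ (t i))
      (ContinuousLinearMap.pi fun i =>
        (ContinuousLinearMap.toSpanSingleton ℝ (deriv ψ (t i))).comp
          (ContinuousLinearMap.proj i)) t := by
  rw [hasFDerivAt_pi]
  intro i
  have h1 := (h.differentiableAt_psi hd (ht i)).hasDerivAt.hasFDerivAt
  exact h1.comp t (hasFDerivAt_apply i t)

lemma injOn_psi (h : IsdMonotoneGenerator d ψ) :
    InjOn (fun t : Fin (d - 1) → ℝ => fun i => ψ (t i)) (goodPoints d ψ) := by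
  intro s hs t ht hst
  funext i
  have h1 : ψ (s i) = ψ (t i) := congrFun hst i
  have h2 := h.toIsGenerator.pseudoInv_ofReal (hs.1 i).le (goodPoints_coord_lt hs i).le
  rw [h1, h.toIsGenerator.pseudoInv_ofReal (ht.1 i).le (goodPoints_coord_lt ht i).le] at h2
  exact ((ENNReal.ofReal_eq_ofReal_iff (ht.1 i).le (hs.1 i).le).1 h2).symm

lemma measurableSet_image (h : IsdMonotoneGenerator d ψ) (hd : 3 ≤ d) :
    MeasurableSet ((fun t : Fin (d - 1) → ℝ => fun i => ψ (t i)) '' goodPoints d ψ) :=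
  measurable_image_of_fderivWithin (measurableSet_goodPoints d ψ)
    (fun _ ht => (h.hasFDerivAt_psi hd ht.1).hasFDerivWithinAt) h.injOn_psi

/-- The substitution `xᵢ = ψ(tᵢ)` turns the integral of the marginal density into the integral
computed in `lintegral_pi`. -/
lemma integral_margDensity (h : IsdMonotoneGenerator d ψ) (hd : 3 ≤ d) :
    ∫ x in (fun t : Fin (d - 1) → ℝ => fun i => ψ (t i)) '' goodPoints d ψ,
      margDensity d ψ x = 1 := by
  have hd1 : d - 1 = d - 2 + 1 := by omega
  rw [integral_image_eq_integral_abs_det_fderiv_smul volume (measurableSet_goodPoints d ψ)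
    (fun _ ht => (h.hasFDerivAt_psi hd ht.1).hasFDerivWithinAt) h.injOn_psi]
  have hcongr : ∀ t ∈ goodPoints d ψ,
      |(ContinuousLinearMap.pi fun i =>
        (ContinuousLinearMap.toSpanSingleton ℝ (deriv ψ (t i))).comp
          (ContinuousLinearMap.proj (R := ℝ) (φ := fun _ : Fin (d - 1) => ℝ) i)).det| •
        margDensity d ψ (fun i => ψ (t i)) = altDeriv ψ (d - 1) (∑ i, t i) := by
    intro t ht
    rw [ContinuousLinearMap.det_pi]
    simp_rw [ContinuousLinearMap.det_toSpanSingleton]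
    exact h.margDensity_psi hd ht
  rw [setIntegral_congr_fun (measurableSet_goodPoints d ψ) hcongr]
  have hvanish : ∀ t : Fin (d - 1) → ℝ, t ∈ (univ.pi fun _ => Ioi 0) \ goodPoints d ψ →
      altDeriv ψ (d - 1) (∑ i, t i) = 0 := by
    intro t ht
    have hpos : ∀ i, 0 < t i := fun i => ht.1 i (mem_univ i)
    have : Nonempty (Fin (d - 1)) := ⟨⟨0, by omega⟩⟩
    have hs : 0 < ∑ i, t i := Finset.sum_pos (fun i _ => hpos i) Finset.univ_nonempty
    by_cases hlt : ENNReal.ofReal (∑ i, t i) < pseudoInv ψ 0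
    · have hnd : ¬ DifferentiableAt ℝ (altDeriv ψ (d - 2)) (∑ i, t i) := fun hdiff =>
        ht.2 ⟨hpos, hlt, hdiff⟩
      have := deriv_zero_of_not_differentiableAt hnd
      rw [deriv_altDeriv, neg_eq_zero, ← hd1] at this
      exact this
    · refine h.altDeriv_eq_zero hs ?_ _ hd1.le
      rw [← psiExt_coe ψ hs.le]
      exact h.toIsGenerator.psiExt_eq_zero_iff.2 (not_lt.1 hlt)
  have hsub : goodPoints d ψ ⊆ univ.pi fun _ => Ioi 0 := fun t ht i _ => ht.1 i
  rw [← setIntegral_eq_of_subset_of_forall_sdiff_eq_zero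
    (MeasurableSet.univ_pi fun _ => measurableSet_Ioi) hsub hvanish]
  have hmeas : Measurable fun t : Fin (d - 1) → ℝ => altDeriv ψ (d - 1) (∑ i, t i) := by
    have := measurable_altDeriv_succ ψ (d - 2)
    rw [← hd1] at this
    exact this.comp (by fun_prop)
  rw [integral_eq_lintegral_of_nonneg_ae _ hmeas.aestronglyMeasurable, volume_pi,
    Measure.restrict_pi_pi, h.lintegral_pi (d - 1) hd1.le, ENNReal.toReal_one]
  rw [EventuallyLE, ae_restrict_iff' (MeasurableSet.univ_pi fun _ => measurableSet_Ioi)]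
  refine Eventually.of_forall fun t ht => ?_
  by_cases hgood : t ∈ goodPoints d ψ
  · change 0 ≤ altDeriv ψ (d - 1) (∑ i, t i)
    have : Nonempty (Fin (d - 1)) := ⟨⟨0, by omega⟩⟩
    have hs : 0 < ∑ i, t i := Finset.sum_pos (fun i _ => hgood.1 i) Finset.univ_nonempty
    have hslope : deriv (altDeriv ψ (d - 2)) (∑ i, t i) ≤ 0 := by
      have hmono := (h.convex_antitone (le_refl (d - 2)))
      have h1 := hmono.1.deriv_le_slope hs (mem_Ioi.2 (by linarith) : (∑ i, t i) + 1 ∈ Ioi (0 : ℝ))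
        (by linarith) hgood.2.2
      have h2 := hmono.2 hs (mem_Ioi.2 (by linarith) : (∑ i, t i) + 1 ∈ Ioi (0 : ℝ)) (by linarith)
      rw [slope_def_field, add_sub_cancel_left, div_one] at h1
      linarith
    rw [deriv_altDeriv, ← hd1] at hslope
    linarith
  · exact (hvanish t ⟨ht, hgood⟩).ge

end IsdMonotoneGenerator

/-! ### Convergence of the kernels -/

namespace IsdMonotoneGenerator

variable {d : ℕ} {ψ : ℝ → ℝ}

/-- Density of the good `y`: almost every `z` is good after the shift by `s`, and `ψ` carries a
dense set of levels `z` to a dense set of values `y = ψ z`. -/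
lemma Icc_subset_closure (h : IsdMonotoneGenerator d ψ) {s f : ℝ} (hs : 0 < s) (hf0 : 0 ≤ f)
    (hf1 : f < 1) :
    Icc f 1 ⊆ closure {y | y ∈ Ioo f 1 ∧
      DifferentiableAt ℝ (altDeriv ψ (d - 2)) (s + (pseudoInv ψ y).toReal)} := by
  have hg := h.toIsGenerator
  rw [← closure_Ioo hf1.ne]
  refine closure_minimal (fun y hy => ?_) isClosed_closure
  have hy0 : 0 < y := hf0.trans_lt hy.1
  have hyI : y ∈ Icc (0 : ℝ) 1 := ⟨hy0.le, hy.2.le⟩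
  have hne := hg.pseudoInv_ne_top ⟨hy0, hy.2.le⟩
  set z := (pseudoInv ψ y).toReal with hz
  have hzφ : ENNReal.ofReal z = pseudoInv ψ y := ENNReal.ofReal_toReal hne
  have hpos : 0 < pseudoInv ψ y := by
    rw [hg.lt_pseudoInv_iff hyI, hg.psiExt_zero]; exact hy.2
  have hz0 : 0 < z := ENNReal.toReal_pos hpos.ne' hne
  have hψz : ψ z = y := by
    rw [← psiExt_coe ψ hz0.le, hzφ, hg.psiExt_pseudoInv hyI]
  have hcont : Tendsto ψ (𝓝 z) (𝓝 y) := by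
    have := hg.continuousOn.continuousAt (Ici_mem_nhds hz0)
    rwa [ContinuousAt, hψz] at this
  have hdense : Dense {w : ℝ | 0 < s + w → DifferentiableAt ℝ (altDeriv ψ (d - 2)) (s + w)} :=
    Measure.dense_of_ae
      ((measurePreserving_add_left (volume : Measure ℝ) s).quasiMeasurePreserving.ae
        (h.ae_differentiableAt le_rfl))
  have hfreq := mem_closure_iff_frequently.1 (hdense z)
  refine mem_closure_iff_frequently.2 (hcont.frequently ((hfreq.and_eventually
    ((eventually_gt_nhds hz0).and (hcont.eventually (Ioo_mem_nhds hy.1 hy.2)))).mono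
      ?_))
  rintro w ⟨hw, hw0, hwI⟩
  refine ⟨hwI, ?_⟩
  have hlt : ENNReal.ofReal w < pseudoInv ψ 0 := by
    rw [← hg.psiExt_pos_iff, psiExt_coe ψ hw0.le]
    exact hf0.trans_lt hwI.1
  rw [hg.pseudoInv_ofReal hw0.le hlt.le, ENNReal.toReal_ofReal hw0.le]
  exact hw (by linarith)

/-- Pointwise convergence of the kernels at a point `x` with `∑ φ(xᵢ) = s` whenever `ψ⁽ᵈ⁻²⁾` is
differentiable at `s` and at `s + φ(y)`. -/
lemma tendsto_markovKernel (h : IsdMonotoneGenerator d ψ) {Ψ : ℕ → ℝ → ℝ}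
    (hΨ : ∀ n, IsdMonotoneGenerator d (Ψ n))
    (hlim : ∀ r : ℝ, 0 < r → Tendsto (fun n => Ψ n r) atTop (𝓝 (ψ r)))
    {x : Fin (d - 1) → ℝ} (hx : ∀ i, x i ∈ Ioo (0 : ℝ) 1) (hx1 : ¬ ∀ i, x i = 1) {s : ℝ}
    (hs : 0 < s) (hsum : ∑ i, pseudoInv ψ (x i) = ENNReal.ofReal s)
    (hlt : ENNReal.ofReal s < pseudoInv ψ 0)
    (hds : DifferentiableAt ℝ (altDeriv ψ (d - 2)) s) {y : ℝ} (hy : y ∈ Ioo (0 : ℝ) 1)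
    (hdy : DifferentiableAt ℝ (altDeriv ψ (d - 2)) (s + (pseudoInv ψ y).toReal)) :
    Tendsto (fun n => markovKernel d (Ψ n) x y) atTop (𝓝 (markovKernel d ψ x y)) := by
  have hg := h.toIsGenerator
  have hgΨ := fun n => (hΨ n).toIsGenerator
  have hyI := Ioo_subset_Icc_self hy
  have hS : Tendsto (fun n => ∑ i, pseudoInv (Ψ n) (x i)) atTop (𝓝 (ENNReal.ofReal s)) := by
    rw [← hsum]
    exact tendsto_finsetSum _ fun i _ => tendsto_pseudoInv hg hgΨ hlim (hx i)
  have hSy : Tendsto (fun n => (∑ i, pseudoInv (Ψ n) (x i)) + pseudoInv (Ψ n) y) atTop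
      (𝓝 (ENNReal.ofReal (s + (pseudoInv ψ y).toReal))) := by
    rw [ENNReal.ofReal_add hs.le ENNReal.toReal_nonneg,
      ENNReal.ofReal_toReal (hg.pseudoInv_ne_top ⟨hy.1, hy.2.le⟩)]
    exact hS.add (tendsto_pseudoInv hg hgΨ hlim hy)
  have hev : ∀ᶠ n in atTop, ∑ i, pseudoInv (Ψ n) (x i) < pseudoInv (Ψ n) 0 := by
    obtain ⟨r, hr0, hsr, hrφ⟩ := ENNReal.lt_iff_exists_real_btwn.1 hlt
    have hr : 0 < r := hs.trans (ENNReal.ofReal_lt_ofReal_iff_of_nonneg hs.le |>.1 hsr)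
    have hψr : 0 < ψ r := (h.psi_mem_Ioo hr hrφ).1
    filter_upwards [hS.eventually (Iio_mem_nhds hsr),
      (hlim r hr).eventually (Ioi_mem_nhds hψr)] with n h1 h2
    refine lt_trans (mem_Iio.1 h1) ?_
    rw [← (hgΨ n).psiExt_pos_iff, psiExt_coe _ hr.le]
    exact h2
  rw [h.markovKernel_eq hx1 (hsum ▸ hlt) hyI]
  have hden := tendsto_DpsiExt h hΨ hlim hs hds hS
  have hnum := tendsto_DpsiExt h hΨ hlim
    (add_pos_of_pos_of_nonneg hs (ENNReal.toReal_nonneg (a := pseudoInv ψ y))) hdy hSy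
  have hdiv := hnum.div hden (h.DpsiExt_ne_zero hs hlt hds)
  rw [ENNReal.ofReal_add hs.le ENNReal.toReal_nonneg,
    ENNReal.ofReal_toReal (hg.pseudoInv_ne_top ⟨hy.1, hy.2.le⟩), ← hsum] at hdiv
  refine hdiv.congr' ?_
  filter_upwards [hev] with n hn
  exact ((hΨ n).markovKernel_eq hx1 hn hyI).symm

end IsdMonotoneGenerator

/-- If the copulas `C_{ψₙ}` converge uniformly on `[0,1]^d` to `C_ψ`,
then there is a Borel set `Λ ⊆ (0,1)^{d-1}` with `∫_Λ c^{1:d-1} dλ_{d-1} = 1` such that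
for every `x ∈ Λ` there is a set `U^x ⊆ [f⁰(x),1]`, dense in `[f⁰(x),1]`, with
`K_{C_n}(x,[0,y]) → K_C(x,[0,y])` for every `y ∈ U^x`. -/
theorem markovKernel_conv_on_dense_set
    (d : ℕ) (hd : 3 ≤ d) (ψ : ℝ → ℝ) (Ψ : ℕ → ℝ → ℝ)
    (hψ : IsdMonotoneGenerator d ψ) (hψnorm : ψ 1 = 1 / 2)
    (hΨ : ∀ n, IsdMonotoneGenerator d (Ψ n)) (hΨnorm : ∀ n, Ψ n 1 = 1 / 2)
    (hconv : TendstoUniformlyOn (fun n => archCopula d (Ψ n)) (archCopula d ψ) atTop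
      {x | ∀ i, x i ∈ Icc (0 : ℝ) 1}) :
    ∃ Λ : Set (Fin (d - 1) → ℝ), MeasurableSet Λ ∧
      Λ ⊆ Set.univ.pi (fun _ => Ioo (0 : ℝ) 1) ∧
      (∫ x in Λ, margDensity d ψ x) = 1 ∧
      ∀ x ∈ Λ, ∃ U : Set ℝ, U ⊆ Icc (fZero d ψ x) 1 ∧
        Icc (fZero d ψ x) 1 ⊆ closure U ∧
        ∀ y ∈ U, Tendsto (fun n => markovKernel d (Ψ n) x y) atTop
          (𝓝 (markovKernel d ψ x y)) := by
  have hg := hψ.toIsGenerator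
  have hlim : ∀ r : ℝ, 0 < r → Tendsto (fun n => Ψ n r) atTop (𝓝 (ψ r)) := fun r hr =>
    tendsto_generator_s6 hd hg hψnorm (fun n => (hΨ n).toIsGenerator) hΨnorm hconv hr
  have hmem : ∀ t ∈ IsdMonotoneGenerator.goodPoints d ψ, ∀ i, ψ (t i) ∈ Ioo (0 : ℝ) 1 :=
    fun t ht i => hψ.psi_mem_Ioo (ht.1 i) (IsdMonotoneGenerator.goodPoints_coord_lt ht i)
  refine ⟨(fun t : Fin (d - 1) → ℝ => fun i => ψ (t i)) '' IsdMonotoneGenerator.goodPoints d ψ,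
    hψ.measurableSet_image hd, ?_, hψ.integral_margDensity hd, ?_⟩
  · rintro _ ⟨t, ht, rfl⟩ i _
    exact hmem t ht i
  rintro _ ⟨t, ht, rfl⟩
  have hne : Nonempty (Fin (d - 1)) := ⟨⟨0, by omega⟩⟩
  have hs : 0 < ∑ i, t i := Finset.sum_pos (fun i _ => ht.1 i) Finset.univ_nonempty
  have hsum := hψ.sum_pseudoInv ht
  have hlt := ht.2.1
  have hf : fZero d ψ (fun i => ψ (t i)) =
      psiExt ψ (pseudoInv ψ 0 - ENNReal.ofReal (∑ i, t i)) := by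
    rw [fZero, hsum, if_neg (not_le.2 hlt)]
  have hf0 : 0 ≤ fZero d ψ (fun i => ψ (t i)) := hf ▸ hg.psiExt_nonneg _
  have hf1 : fZero d ψ (fun i => ψ (t i)) < 1 := by
    rw [hf, ← hg.psiExt_zero]
    exact hg.psiExt_strict (tsub_pos_of_lt hlt) tsub_le_self
  refine ⟨_, fun y hy => Ioo_subset_Icc_self hy.1, hψ.Icc_subset_closure hs hf0 hf1, ?_⟩
  rintro y ⟨hy, hdy⟩
  exact hψ.tendsto_markovKernel hΨ hlim (hmem t ht)
    (fun h1 => (hmem t ht hne.some).2.ne (h1 _)) hs hsum hlt ht.2.2 ⟨hf0.trans_lt hy.1, hy.2⟩ hdy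
end
end
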